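/- arXiv:2408.11177 — 2 statements merged into one kernel-verified Lean document; each statement's English description precedes it below -/
import Mathlib

section
/- Let r > 1 and assume lim_{k→∞} k^d (log k)^r J_k exists and lies in (0,∞). Then for every p > 1 one has ν₀ > 0; equivalently, there exists a constant C > 0 such that Σ_n |u_n|^{p+1} ≤ C · M[u]^{(p−1)/2} ⟨Lu,u⟩ for every u ∈ ℓ²(Z^d). -/
open scoped BigOperators
open Filter Topology

noncomputable section

/-- The `ℓ^∞` norm of a lattice point of `ℤ^d`, as a natural number. -/
def latNorm {d : ℕ} (m : Fin d → ℤ) : ℕ := Finset.univ.sup fun i => (m i).natAbs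

/-- The summand `J_{|m|}` for `m ≠ 0` (and `0` for `m = 0`). -/
def JbarSummand (d : ℕ) (J : ℕ → ℝ) (m : Fin d → ℤ) : ℝ :=
  if m = 0 then 0 else J (latNorm m)

/-- `J̄ = Σ_{m ≠ 0} J_{|m|}`. -/
def Jbar (d : ℕ) (J : ℕ → ℝ) : ℝ := ∑' m : Fin d → ℤ, JbarSummand d J m

/-- The quadratic form `⟨Lu,u⟩ = (1/2) Σ_n Σ_{m ≠ n} J_{|n-m|} |u_n - u_m|²`. -/
def pairing (d : ℕ) (J : ℕ → ℝ) (u : (Fin d → ℤ) → ℂ) : ℝ :=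
  (1/2) * ∑' n : Fin d → ℤ, ∑' m : Fin d → ℤ,
    if m = n then 0 else J (latNorm (n - m)) * ‖u n - u m‖ ^ 2

/-- The mass `M[u] = Σ_n |u_n|²`. -/
def mass (d : ℕ) (u : (Fin d → ℤ) → ℂ) : ℝ := ∑' n : Fin d → ℤ, ‖u n‖ ^ 2

/-- Membership in `ℓ²(ℤ^d)`. -/
def MemL2 (d : ℕ) (u : (Fin d → ℤ) → ℂ) : Prop := Summable fun n : Fin d → ℤ => ‖u n‖ ^ 2

/-- The potential term `Σ_n |u_n|^{p+1}`. -/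
def ppot (d : ℕ) (p : ℝ) (u : (Fin d → ℤ) → ℂ) : ℝ := ∑' n : Fin d → ℤ, ‖u n‖ ^ (p + 1)

/-- The energy `H[u] = (1/2)⟨Lu,u⟩ - (1/(p+1)) Σ_n |u_n|^{p+1}`. -/
def energy (d : ℕ) (J : ℕ → ℝ) (p : ℝ) (u : (Fin d → ℤ) → ℂ) : ℝ :=
  (1/2) * pairing d J u - (1/(p+1)) * ppot d p u

/-- `I_ν = inf {H[q] : q ∈ ℓ², M[q] = ν}`. -/
def Ifun (d : ℕ) (J : ℕ → ℝ) (p : ℝ) (ν : ℝ) : ℝ :=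
  sInf {x : ℝ | ∃ q, MemL2 d q ∧ mass d q = ν ∧ energy d J p q = x}

/-- The Gagliardo–Nirenberg-type inequality at mass level `ν`:
`Σ_n |q_n|^{p+1} ≤ ((p+1)/2) ν^{-(p-1)/2} M[q]^{(p-1)/2} ⟨Lq,q⟩` for all `q ∈ ℓ²`. -/
def GNineq (d : ℕ) (J : ℕ → ℝ) (p ν : ℝ) : Prop :=
  ∀ q : (Fin d → ℤ) → ℂ, MemL2 d q →
    ppot d p q ≤ ((p + 1) / 2) * ν ^ (-(p - 1) / 2) * (mass d q) ^ ((p - 1) / 2) *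
      pairing d J q

/-- The excitation threshold `ν₀ = sup {ν > 0 : GN inequality holds at level ν}`,
with `ν₀ = 0` if no such `ν` exists. -/
def nuZero (d : ℕ) (J : ℕ → ℝ) (p : ℝ) : ℝ :=
  sSup (insert 0 {ν : ℝ | 0 < ν ∧ GNineq d J p ν})

/-- The summand of the quadratic form. -/
def pairSummand (d : ℕ) (J : ℕ → ℝ) (u : (Fin d → ℤ) → ℂ) (n m : Fin d → ℤ) : ℝ :=
  if m = n then 0 else J (latNorm (n - m)) * ‖u n - u m‖ ^ 2

lemma pairSummand_nonneg (d : ℕ) (J : ℕ → ℝ) (hJ : ∀ k, 0 ≤ J k) (u : (Fin d → ℤ) → ℂ)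
    (n m : Fin d → ℤ) : 0 ≤ pairSummand d J u n m := by
  unfold pairSummand
  split_ifs
  · exact le_rfl
  · exact mul_nonneg (hJ _) (sq_nonneg _)

lemma JbarSummand_nonneg (d : ℕ) (J : ℕ → ℝ) (hJ : ∀ k, 0 ≤ J k)
    (m : Fin d → ℤ) : 0 ≤ JbarSummand d J m := by
  unfold JbarSummand
  split_ifs
  · exact le_rfl
  · exact hJ _

lemma pairSummand_summable (d : ℕ) (J : ℕ → ℝ) (hJ : ∀ k, 0 ≤ J k)
    (hJbar : Summable (JbarSummand d J)) (u : (Fin d → ℤ) → ℂ) (hu : MemL2 d u) :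
    Summable (fun x : (Fin d → ℤ) × (Fin d → ℤ) => pairSummand d J u x.1 x.2) := by
  have h0 : Summable (fun x : (Fin d → ℤ) × (Fin d → ℤ) =>
      ‖u x.1‖ ^ 2 * JbarSummand d J x.2) :=
    Summable.mul_of_nonneg hu hJbar (fun _ => sq_nonneg _) (JbarSummand_nonneg d J hJ)
  let e1 : (Fin d → ℤ) × (Fin d → ℤ) ≃ (Fin d → ℤ) × (Fin d → ℤ) :=
    { toFun := fun x => (x.1, x.1 - x.2)
      invFun := fun x => (x.1, x.1 - x.2)
      left_inv := fun x => by simp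
      right_inv := fun x => by simp }
  let e2 : (Fin d → ℤ) × (Fin d → ℤ) ≃ (Fin d → ℤ) × (Fin d → ℤ) :=
    { toFun := fun x => (x.2, x.1 - x.2)
      invFun := fun x => (x.1 + x.2, x.1)
      left_inv := fun x => by simp
      right_inv := fun x => by simp }
  have h1 := (e1.summable_iff).2 h0
  have h2 := (e2.summable_iff).2 h0
  refine Summable.of_nonneg_of_le (fun x => pairSummand_nonneg d J hJ u _ _) ?_
    ((h1.add h2).mul_left 2)
  rintro ⟨n, m⟩
  simp only [Function.comp, e1, e2, Equiv.coe_fn_mk, pairSummand, JbarSummand]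
  by_cases h : m = n
  · simp [h]
  · have h' : n - m ≠ 0 := fun h'' => h (sub_eq_zero.1 h'').symm
    simp only [h, h', if_false]
    have hn : ‖u n - u m‖ ≤ ‖u n‖ + ‖u m‖ := norm_sub_le _ _
    have : ‖u n - u m‖ ^ 2 ≤ 2 * (‖u n‖ ^ 2 + ‖u m‖ ^ 2) := by
      nlinarith [norm_nonneg (u n - u m), sq_nonneg (‖u n‖ - ‖u m‖), norm_nonneg (u n),
        norm_nonneg (u m)]
    nlinarith [mul_le_mul_of_nonneg_left this (hJ (latNorm (n - m)))]

lemma J_lower (d : ℕ) (J : ℕ → ℝ) (r : ℝ) (hJ : ∀ k, 0 ≤ J k) (ε : ℝ) (hε : 0 < ε)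
    (horder : ∃ A : ℝ, 0 < A ∧
      Tendsto (fun k : ℕ => (k : ℝ) ^ (d : ℝ) * Real.log k ^ r * J k) atTop (𝓝 A)) :
    ∃ c : ℝ, 0 < c ∧ ∃ K : ℕ, 1 ≤ K ∧ ∀ k : ℕ, K ≤ k → c * (k : ℝ) ^ (-((d : ℝ) + ε)) ≤ J k := by
  obtain ⟨A, hA, hT⟩ := horder
  have h1 := hT.eventually (lt_mem_nhds (half_lt_self hA))
  have h2 := ((isLittleO_log_rpow_rpow_atTop r hε).comp_tendsto
    tendsto_natCast_atTop_atTop).bound (zero_lt_one)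
  obtain ⟨K, hK⟩ := eventually_atTop.1 (h1.and h2)
  refine ⟨A / 2, by positivity, max K 1, le_max_right _ _, fun k hk => ?_⟩
  obtain ⟨ha, hb⟩ := hK k ((le_max_left _ _).trans hk)
  have hk1 : 1 ≤ k := (le_max_right _ _).trans hk
  have hkpos : (0 : ℝ) < k := by exact_mod_cast hk1
  have hb' : Real.log k ^ r ≤ (k : ℝ) ^ ε := by
    have := (le_abs_self _).trans hb
    simpa [abs_of_nonneg (Real.rpow_nonneg hkpos.le ε)] using this
  rw [Real.rpow_neg hkpos.le, ← div_eq_mul_inv, div_le_iff₀ (by positivity),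
    Real.rpow_add hkpos]
  have h3 : (k : ℝ) ^ (d : ℝ) * Real.log k ^ r * J k ≤ (k : ℝ) ^ (d : ℝ) * (k : ℝ) ^ ε * J k := by
    gcongr
    exact hJ k
  linarith

lemma box_sum (d : ℕ) (hd : 1 ≤ d) (J : ℕ → ℝ) (hJ : ∀ k, 0 ≤ J k) (ε c : ℝ) (hε : 0 < ε)
    (hc : 0 < c) (K : ℕ) (hK : 1 ≤ K)
    (hJl : ∀ k : ℕ, K ≤ k → c * (k : ℝ) ^ (-((d : ℝ) + ε)) ≤ J k)
    (u : (Fin d → ℤ) → ℂ) (hu : MemL2 d u) (n : Fin d → ℤ)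
    (hs : Summable (pairSummand d J u n)) (N : ℕ) (hN : 1 ≤ N)
    (hNM : 4 * mass d u ≤ (N : ℝ) ^ d * ‖u n‖ ^ 2) :
    c * ((K : ℝ) + 1) ^ (-((d : ℝ) + ε)) / 4 * (N : ℝ) ^ (-ε) * ‖u n‖ ^ 2
      ≤ ∑' m, pairSummand d J u n m := by
  have hNpos : (0 : ℝ) < N := by exact_mod_cast hN
  set B : Finset (Fin d → ℤ) := Fintype.piFinset (fun i => Finset.Ico (n i + K) (n i + K + N))
    with hB
  have hcard : B.card = N ^ d := by
    simp [hB, Fintype.card_piFinset]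
  set w : ℝ := c * ((K : ℝ) + 1) ^ (-((d : ℝ) + ε)) * (N : ℝ) ^ (-((d : ℝ) + ε)) with hw
  have hw0 : 0 ≤ w := by positivity
  have hterm : ∀ m ∈ B, w * (‖u n‖ ^ 2 / 2 - ‖u m‖ ^ 2) ≤ pairSummand d J u n m := by
    intro m hm
    have hm' : ∀ i, n i + K ≤ m i ∧ m i < n i + K + N := by
      simpa [hB, Fintype.mem_piFinset] using hm
    have hne : m ≠ n := by
      intro h
      have := (hm' ⟨0, hd⟩).1
      rw [h] at this
      omega
    have hlo : K ≤ latNorm (n - m) := by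
      have h1 : ((n - m) ⟨0, hd⟩).natAbs ≤ latNorm (n - m) :=
        Finset.le_sup (f := fun i => ((n - m) i).natAbs) (Finset.mem_univ _)
      have h2 := hm' ⟨0, hd⟩
      simp only [Pi.sub_apply] at h1
      omega
    have hhi : latNorm (n - m) ≤ K + N := by
      refine Finset.sup_le fun i _ => ?_
      have h2 := hm' i
      simp only [Pi.sub_apply]
      omega
    have hJw : w ≤ J (latNorm (n - m)) := by
      refine le_trans ?_ (hJl _ hlo)
      rw [hw, mul_assoc, ← Real.mul_rpow (by positivity) (by positivity)]
      have hpos : (0 : ℝ) < latNorm (n - m) := by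
        exact_mod_cast hK.trans hlo
      have hle : (latNorm (n - m) : ℝ) ≤ ((K : ℝ) + 1) * N := by
        have : latNorm (n - m) ≤ (K + 1) * N := by nlinarith
        exact_mod_cast this
      refine mul_le_mul_of_nonneg_left ?_ hc.le
      exact Real.rpow_le_rpow_of_nonpos hpos hle (by
        have : (0 : ℝ) ≤ d := by positivity
        linarith)
    have hq : ‖u n‖ ^ 2 / 2 - ‖u m‖ ^ 2 ≤ ‖u n - u m‖ ^ 2 := by
      have h1 : ‖u n‖ ≤ ‖u n - u m‖ + ‖u m‖ := by
        simpa using norm_add_le (u n - u m) (u m)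
      nlinarith [norm_nonneg (u n - u m), norm_nonneg (u n), norm_nonneg (u m),
        sq_nonneg (‖u n - u m‖ - ‖u m‖)]
    simp only [pairSummand, hne, if_false]
    calc _ ≤ w * ‖u n - u m‖ ^ 2 := mul_le_mul_of_nonneg_left hq hw0
      _ ≤ _ := mul_le_mul_of_nonneg_right hJw (sq_nonneg _)
  have hmass : ∑ m ∈ B, ‖u m‖ ^ 2 ≤ mass d u :=
    Summable.sum_le_tsum B (fun _ _ => sq_nonneg _) hu
  calc _ = w * ((N : ℝ) ^ d * ‖u n‖ ^ 2 / 4) := by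
        rw [hw, neg_add, Real.rpow_add hNpos, Real.rpow_neg hNpos.le (d : ℝ), Real.rpow_natCast]
        field_simp
    _ ≤ w * ((N : ℝ) ^ d * (‖u n‖ ^ 2 / 2) - ∑ m ∈ B, ‖u m‖ ^ 2) :=
        mul_le_mul_of_nonneg_left (by linarith) hw0
    _ = ∑ m ∈ B, w * (‖u n‖ ^ 2 / 2 - ‖u m‖ ^ 2) := by
        rw [← Finset.mul_sum, Finset.sum_sub_distrib, Finset.sum_const, hcard]
        simp
    _ ≤ ∑ m ∈ B, pairSummand d J u n m := Finset.sum_le_sum hterm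
    _ ≤ _ := Summable.sum_le_tsum B (fun _ _ => pairSummand_nonneg d J hJ u _ _) hs

lemma pointwise_bound (d : ℕ) (hd : 1 ≤ d) (p : ℝ) (hp : 1 < p) (J : ℕ → ℝ)
    (hJ : ∀ k, 0 ≤ J k) (r : ℝ)
    (horder : ∃ A : ℝ, 0 < A ∧
      Tendsto (fun k : ℕ => (k : ℝ) ^ (d : ℝ) * Real.log k ^ r * J k) atTop (𝓝 A)) :
    ∃ b : ℝ, 0 < b ∧ ∀ u : (Fin d → ℤ) → ℂ, MemL2 d u → ∀ n,
      Summable (pairSummand d J u n) →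
      b * ‖u n‖ ^ (p + 1) ≤ (mass d u) ^ ((p - 1) / 2) * ∑' m, pairSummand d J u n m := by
  have hd0 : (0 : ℝ) < d := by exact_mod_cast hd
  set s : ℝ := (p - 1) / 2 with hsdef
  have hs : 0 < s := by rw [hsdef]; linarith
  set ε : ℝ := d * s with hεd
  have hε : 0 < ε := by positivity
  obtain ⟨c, hc, K, hK, hJl⟩ := J_lower d J r hJ ε hε horder
  refine ⟨c * ((K : ℝ) + 1) ^ (-((d : ℝ) + ε)) / 4 * (2 ^ (-ε) * 4 ^ (-s)), by positivity,
    fun u hu n hsum => ?_⟩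
  set S := ∑' m, pairSummand d J u n m with hS
  set D := c * ((K : ℝ) + 1) ^ (-((d : ℝ) + ε)) / 4 with hD
  have hD0 : 0 < D := by positivity
  have hS0 : 0 ≤ S := tsum_nonneg fun m => pairSummand_nonneg d J hJ u n m
  have hM0 : 0 ≤ mass d u := tsum_nonneg fun m => sq_nonneg _
  rcases (norm_nonneg (u n)).eq_or_lt with h0 | h0
  · rw [← h0, Real.zero_rpow (by linarith), mul_zero]
    positivity
  have hMa : ‖u n‖ ^ 2 ≤ mass d u := hu.le_tsum n (fun _ _ => sq_nonneg _)
  have hMpos : 0 < mass d u := lt_of_lt_of_le (by positivity) hMa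
  set t : ℝ := mass d u / ‖u n‖ ^ 2 with ht
  have ht1 : 1 ≤ t := by rw [ht, le_div_iff₀ (by positivity)]; linarith
  set y : ℝ := (4 * t) ^ ((d : ℝ)⁻¹) with hy
  have hy1 : 1 ≤ y := Real.one_le_rpow (by linarith) (by positivity)
  have hyd : y ^ d = 4 * t := by
    rw [hy, Real.rpow_inv_natCast_pow (by linarith) (by omega)]
  have hNy : y ≤ (⌈y⌉₊ : ℝ) := Nat.le_ceil y
  have hN2 : (⌈y⌉₊ : ℝ) ≤ 2 * y := by
    have := Nat.ceil_lt_add_one (show 0 ≤ y by linarith)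
    linarith
  have hN1 : 1 ≤ ⌈y⌉₊ := by
    have : (1 : ℝ) ≤ (⌈y⌉₊ : ℝ) := hy1.trans hNy
    exact_mod_cast this
  have hbox := box_sum d hd J hJ ε c hε hc K hK hJl u hu n hsum ⌈y⌉₊ hN1 (by
    calc 4 * mass d u = y ^ d * ‖u n‖ ^ 2 := by rw [hyd, ht]; field_simp
      _ ≤ _ := by gcongr)
  have hNε : 2 ^ (-ε) * (4 ^ (-s) * t ^ (-s)) ≤ (⌈y⌉₊ : ℝ) ^ (-ε) := by
    have h1 : (2 * y) ^ (-ε) ≤ (⌈y⌉₊ : ℝ) ^ (-ε) :=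
      Real.rpow_le_rpow_of_nonpos (by linarith) hN2 (by linarith)
    refine le_trans (le_of_eq ?_) h1
    rw [Real.mul_rpow (by norm_num) (by linarith), hy, ← Real.rpow_mul (by linarith),
      ← Real.mul_rpow (by norm_num) (by linarith)]
    congr 2
    rw [hεd]
    field_simp
  have hfin : ‖u n‖ ^ (p + 1) = mass d u ^ s * (t ^ (-s) * ‖u n‖ ^ 2) := by
    rw [Real.rpow_neg (by linarith), ht, Real.div_rpow hM0 (by positivity),
      ← Real.rpow_natCast ‖u n‖ 2, ← Real.rpow_mul h0.le]
    have hMs : 0 < mass d u ^ s := by positivity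
    have : p + 1 = ((2 : ℕ) : ℝ) * s + ((2 : ℕ) : ℝ) := by rw [hsdef]; push_cast; ring
    rw [this, Real.rpow_add h0]
    field_simp
  rw [hfin]
  calc _ = mass d u ^ s * (D * (2 ^ (-ε) * (4 ^ (-s) * t ^ (-s))) * ‖u n‖ ^ 2) := by ring
    _ ≤ mass d u ^ s * (D * (⌈y⌉₊ : ℝ) ^ (-ε) * ‖u n‖ ^ 2) := by gcongr
    _ ≤ _ := by gcongr

lemma main_bound (d : ℕ) (hd : 1 ≤ d) (p : ℝ) (hp : 1 < p) (J : ℕ → ℝ)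
    (hJpos : ∀ k, 0 ≤ J k) (hJbar : Summable (JbarSummand d J)) (r : ℝ)
    (horder : ∃ A : ℝ, 0 < A ∧
      Tendsto (fun k : ℕ => (k : ℝ) ^ (d : ℝ) * Real.log k ^ r * J k) atTop (𝓝 A)) :
    ∃ C : ℝ, 0 < C ∧ ∀ u : (Fin d → ℤ) → ℂ, MemL2 d u →
        ppot d p u ≤ C * (mass d u) ^ ((p - 1) / 2) * pairing d J u := by
  obtain ⟨b, hb, H⟩ := pointwise_bound d hd p hp J hJpos r horder
  refine ⟨2 / b, by positivity, fun u hu => ?_⟩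
  have hs := pairSummand_summable d J hJpos hJbar u hu
  have hs1 : ∀ n, Summable (pairSummand d J u n) := fun n => hs.prod_factor n
  have hs2 : Summable fun n => ∑' m, pairSummand d J u n m := hs.prod
  have hle : ∀ n, ‖u n‖ ^ (p + 1) ≤
      (1 / b * mass d u ^ ((p - 1) / 2)) * ∑' m, pairSummand d J u n m := by
    intro n
    have := H u hu n (hs1 n)
    rw [mul_assoc, one_div, ← div_eq_inv_mul, le_div_iff₀ hb]
    linarith
  have hs3 := hs2.mul_left (1 / b * mass d u ^ ((p - 1) / 2))
  have hs4 : Summable fun n => ‖u n‖ ^ (p + 1) :=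
    Summable.of_nonneg_of_le (fun n => by positivity) hle hs3
  have := hs4.tsum_le_tsum hle hs3
  rw [tsum_mul_left] at this
  have hp : pairing d J u = 1 / 2 * ∑' n, ∑' m, pairSummand d J u n m := rfl
  rw [hp]
  unfold ppot
  refine this.trans (le_of_eq ?_)
  ring

lemma GN_bdd (d : ℕ) (p : ℝ) (hp : 1 < p) (J : ℕ → ℝ) :
    BddAbove (insert 0 {ν : ℝ | 0 < ν ∧ GNineq d J p ν}) := by
  set q : (Fin d → ℤ) → ℂ := fun n => if n = 0 then 1 else 0 with hq
  have hqsq : (fun n => ‖q n‖ ^ 2) = fun n => if n = 0 then (1 : ℝ) else 0 := by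
    funext n
    by_cases h : n = 0 <;> simp [hq, h]
  have hqp : (fun n => ‖q n‖ ^ (p + 1)) = fun n => if n = 0 then (1 : ℝ) else 0 := by
    funext n
    by_cases h : n = 0
    · simp [hq, h]
    · simp [hq, h, Real.zero_rpow (show p + 1 ≠ 0 by linarith)]
  have hmem : MemL2 d q := by
    unfold MemL2
    rw [hqsq]
    exact (hasSum_ite_eq (0 : Fin d → ℤ) (1 : ℝ)).summable
  have hmass : mass d q = 1 := by
    unfold mass
    rw [hqsq]
    exact (hasSum_ite_eq (0 : Fin d → ℤ) (1 : ℝ)).tsum_eq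
  have hpp : ppot d p q = 1 := by
    unfold ppot
    rw [hqp]
    exact (hasSum_ite_eq (0 : Fin d → ℤ) (1 : ℝ)).tsum_eq
  set P := (p + 1) / 2 * pairing d J q with hP
  refine ⟨max 0 (P ^ ((p - 1) / 2)⁻¹), ?_⟩
  rintro ν (rfl | ⟨hν, hG⟩)
  · exact le_max_left _ _
  · refine le_trans ?_ (le_max_right _ _)
    have h1 := hG q hmem
    rw [hmass, hpp, Real.one_rpow, mul_one, neg_div, Real.rpow_neg hν.le] at h1
    have hx : 0 < ν ^ ((p - 1) / 2) := by positivity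
    have h2 : ν ^ ((p - 1) / 2) ≤ P := by
      have h3 := mul_le_mul_of_nonneg_left h1 hx.le
      have h4 : ν ^ ((p - 1) / 2) * ((p + 1) / 2 * (ν ^ ((p - 1) / 2))⁻¹ * pairing d J q) = P := by
        rw [hP]; field_simp
      linarith
    have hs : (p - 1) / 2 ≠ 0 := by
      have : 0 < (p - 1) / 2 := by linarith
      exact this.ne'
    calc ν = (ν ^ ((p - 1) / 2)) ^ ((p - 1) / 2)⁻¹ := (Real.rpow_rpow_inv hν.le hs).symm
      _ ≤ _ := Real.rpow_le_rpow hx.le h2 (by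
        have : 0 < (p - 1) / 2 := by linarith
        positivity)

theorem stmt11 (d : ℕ) (hd : 1 ≤ d) (p : ℝ) (hp : 1 < p) (J : ℕ → ℝ)
    (hJpos : ∀ k, 0 ≤ J k) (hJbar : Summable (JbarSummand d J))
    (r : ℝ) (hr : 1 < r)
    (horder : ∃ A : ℝ, 0 < A ∧
      Tendsto (fun k : ℕ => (k : ℝ) ^ (d : ℝ) * Real.log k ^ r * J k) atTop (𝓝 A)) :
    0 < nuZero d J p ∧
      ∃ C : ℝ, 0 < C ∧ ∀ u : (Fin d → ℤ) → ℂ, MemL2 d u →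
        ppot d p u ≤ C * (mass d u) ^ ((p - 1) / 2) * pairing d J u := by
  obtain ⟨C, hC, H⟩ := main_bound d hd p hp J hJpos hJbar r horder
  refine ⟨?_, C, hC, H⟩
  have hs : 0 < (p - 1) / 2 := by linarith
  set ν : ℝ := (2 * C / (p + 1)) ^ (-((p - 1) / 2)⁻¹) with hν
  have hbase : 0 < 2 * C / (p + 1) := by
    have : 0 < p + 1 := by linarith
    positivity
  have hνpos : 0 < ν := Real.rpow_pos_of_pos hbase _
  have hpow : (p + 1) / 2 * ν ^ (-(p - 1) / 2) = C := by
    have h1 : ν ^ (-(p - 1) / 2) = 2 * C / (p + 1) := by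
      rw [hν, ← Real.rpow_mul hbase.le, neg_div, neg_mul_neg, inv_mul_cancel₀ hs.ne',
        Real.rpow_one]
    have h2 : p + 1 ≠ 0 := by linarith
    rw [h1]
    field_simp
  refine lt_of_lt_of_le hνpos (le_csSup (GN_bdd d p hp J) (Or.inr ⟨hνpos, ?_⟩))
  intro q hq
  rw [hpow]
  exact H q hq
end
end

section
/- In the two-dimensional non-radial setting, assume 1 < p < 1 + 4α₁′α₂′/(α₁′+α₂′). Then ν₀ = 0, and for every ν > 0 one has I_ν < 0 and there exists q ∈ ℓ²(Z²) with M[q] = ν and H[q] = I_ν. -/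
open scoped BigOperators ENNReal
open Filter Topology

noncomputable section

/-- `J^{(i)}` is of order `α ∈ (0,∞]` (one-dimensional coupling): for finite `α`,
`k^{1+α} J_k` tends to a finite positive limit; for `α = ∞`, `k^{1+β} J_k → 0` for
every `β > 0`. -/
def JOrder1 (J : ℕ → ℝ) (α : ℝ≥0∞) : Prop :=
  if α = ⊤ then
    ∀ β : ℝ, 0 < β → Tendsto (fun k : ℕ => (k : ℝ) ^ ((1 : ℝ) + β) * J k) atTop (𝓝 0)
  else
    ∃ A : ℝ, 0 < A ∧ Tendsto (fun k : ℕ => (k : ℝ) ^ ((1 : ℝ) + α.toReal) * J k) atTop (𝓝 A)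

/-- `α′ = α/2` for `α ∈ (0,2)` and `α′ = 1` for `α ∈ [2,∞]`. -/
def alphaPrime (α : ℝ≥0∞) : ℝ := if α < 2 then α.toReal / 2 else 1

/-- The quadratic form of the two-dimensional non-radial operator:
`⟨Lu,u⟩ = (1/2) Σ_m Σ_{n ≠ n'} J⁽¹⁾_{|n-n'|} |u_{n,m} - u_{n',m}|²
        + (1/2) Σ_n Σ_{m ≠ m'} J⁽²⁾_{|m-m'|} |u_{n,m} - u_{n,m'}|²`. -/
def pairing2 (J1 J2 : ℕ → ℝ) (u : ℤ × ℤ → ℂ) : ℝ :=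
  (1/2) * (∑' m : ℤ, ∑' n : ℤ, ∑' n' : ℤ,
      if n' = n then 0 else J1 (n - n').natAbs * ‖u (n, m) - u (n', m)‖ ^ 2) +
  (1/2) * (∑' n : ℤ, ∑' m : ℤ, ∑' m' : ℤ,
      if m' = m then 0 else J2 (m - m').natAbs * ‖u (n, m) - u (n, m')‖ ^ 2)

/-- The mass `M[u] = Σ |u|²` on `ℤ²`. -/
def mass2 (u : ℤ × ℤ → ℂ) : ℝ := ∑' z : ℤ × ℤ, ‖u z‖ ^ 2

/-- Membership in `ℓ²(ℤ²)`. -/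
def MemL2two (u : ℤ × ℤ → ℂ) : Prop := Summable fun z : ℤ × ℤ => ‖u z‖ ^ 2

/-- The potential term `Σ |u|^{p+1}` on `ℤ²`. -/
def ppot2 (p : ℝ) (u : ℤ × ℤ → ℂ) : ℝ := ∑' z : ℤ × ℤ, ‖u z‖ ^ (p + 1)

/-- The energy `H[u] = (1/2)⟨Lu,u⟩ - (1/(p+1)) Σ |u|^{p+1}` on `ℤ²`. -/
def energy2 (J1 J2 : ℕ → ℝ) (p : ℝ) (u : ℤ × ℤ → ℂ) : ℝ :=
  (1/2) * pairing2 J1 J2 u - (1/(p+1)) * ppot2 p u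

/-- `I_ν = inf {H[q] : q ∈ ℓ²(ℤ²), M[q] = ν}`. -/
def Ifun2 (J1 J2 : ℕ → ℝ) (p ν : ℝ) : ℝ :=
  sInf {x : ℝ | ∃ q, MemL2two q ∧ mass2 q = ν ∧ energy2 J1 J2 p q = x}

/-- The Gagliardo–Nirenberg-type inequality at mass level `ν` on `ℤ²`. -/
def GNineq2 (J1 J2 : ℕ → ℝ) (p ν : ℝ) : Prop :=
  ∀ q : ℤ × ℤ → ℂ, MemL2two q →
    ppot2 p q ≤ ((p + 1) / 2) * ν ^ (-(p - 1) / 2) * (mass2 q) ^ ((p - 1) / 2) *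
      pairing2 J1 J2 q

/-- The excitation threshold `ν₀` on `ℤ²`, with `ν₀ = 0` if the GN inequality fails
for every positive mass level. -/
def nuZero2 (J1 J2 : ℕ → ℝ) (p : ℝ) : ℝ :=
  sSup (insert 0 {ν : ℝ | 0 < ν ∧ GNineq2 J1 J2 p ν})


/-! ### Basic facts: the product representation of the quadratic form -/

/-- Coupling weight on `ℤ`. -/
def wt (J : ℕ → ℝ) (k : ℤ) : ℝ := if k = 0 then 0 else J k.natAbs

/-- The one-directional part of the form (acting on the second coordinate). -/
def DD (J : ℕ → ℝ) (v : ℤ × ℤ → ℂ) : ℝ :=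
  ∑' n : ℤ, ∑' m : ℤ, ∑' m' : ℤ,
      if m' = m then 0 else J (m - m').natAbs * ‖v (n, m) - v (n, m')‖ ^ 2

/-- The summand on the product. -/
def dt (J : ℕ → ℝ) (v : ℤ × ℤ → ℂ) (x : (ℤ × ℤ) × ℤ) : ℝ :=
  wt J x.2 * ‖v x.1 - v (x.1.1, x.1.2 - x.2)‖ ^ 2

lemma pairing2_eq (J1 J2 : ℕ → ℝ) (u : ℤ × ℤ → ℂ) :
    pairing2 J1 J2 u = (1/2) * DD J1 (fun z => u z.swap) + (1/2) * DD J2 u := rfl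

/-- Shear equivalence. -/
def shear : ((ℤ × ℤ) × ℤ) ≃ ((ℤ × ℤ) × ℤ) where
  toFun x := ((x.1.1, x.1.2 - x.2), x.2)
  invFun x := ((x.1.1, x.1.2 + x.2), x.2)
  left_inv x := by simp
  right_inv x := by simp

lemma hasSum_shear (w : ℤ → ℝ) (a : ℤ × ℤ → ℝ) (hw : Summable w) (ha : Summable a)
    (hw0 : ∀ k, 0 ≤ w k) (ha0 : ∀ z, 0 ≤ a z) :
    HasSum (fun x : (ℤ × ℤ) × ℤ => w x.2 * (a x.1 + a (x.1.1, x.1.2 - x.2)))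
      (2 * (∑' k, w k) * ∑' z, a z) := by
  have hs : Summable (fun x : (ℤ × ℤ) × ℤ => a x.1 * w x.2) :=
    ha.mul_of_nonneg hw ha0 hw0
  have h1 : HasSum (fun x : (ℤ × ℤ) × ℤ => a x.1 * w x.2) ((∑' z, a z) * ∑' k, w k) :=
    ha.hasSum.mul hw.hasSum hs
  have h2 : HasSum ((fun x : (ℤ × ℤ) × ℤ => a x.1 * w x.2) ∘ shear)
      ((∑' z, a z) * ∑' k, w k) := (Equiv.hasSum_iff shear).2 h1
  have h3 := h1.add h2
  convert h3 using 1
  · ext x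
    simp [shear]
    ring
  · ring

lemma summable_wt {J : ℕ → ℝ} (h : Summable fun k : ℕ => J (k + 1)) : Summable (wt J) := by
  have h' : Summable (fun k : ℕ => if k = 0 then 0 else J k) := by
    rw [← summable_nat_add_iff 1]
    simpa using h
  rw [summable_int_iff_summable_nat_and_neg]
  constructor <;>
  · refine h'.congr fun k => ?_
    simp [wt]

lemma wt_nonneg {J : ℕ → ℝ} (h : ∀ k, 0 ≤ J k) (k : ℤ) : 0 ≤ wt J k := by
  unfold wt; split_ifs
  · exact le_rfl
  · exact h _

lemma norm_sub_sq_le (x y : ℂ) : ‖x - y‖ ^ 2 ≤ 2 * (‖x‖ ^ 2 + ‖y‖ ^ 2) := by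
  have := norm_sub_le x y
  nlinarith [sq_nonneg (‖x‖ - ‖y‖), norm_nonneg (x - y), norm_nonneg x, norm_nonneg y]

lemma dt_nonneg {J : ℕ → ℝ} (h : ∀ k, 0 ≤ J k) (v : ℤ × ℤ → ℂ) (x) : 0 ≤ dt J v x :=
  mul_nonneg (wt_nonneg h _) (by positivity)

lemma dt_summable {J : ℕ → ℝ} (h0 : ∀ k, 0 ≤ J k) (h : Summable fun k : ℕ => J (k + 1))
    {v : ℤ × ℤ → ℂ} (hv : MemL2two v) :
    Summable (dt J v) ∧ ∑' x, dt J v x ≤ 4 * (∑' k, wt J k) * mass2 v := by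
  have hs := (hasSum_shear (wt J) (fun z => ‖v z‖ ^ 2) (summable_wt h) hv (wt_nonneg h0)
    (fun z => by positivity)).mul_left 2
  have hle : ∀ x, dt J v x ≤
      2 * (wt J x.2 * (‖v x.1‖ ^ 2 + ‖v (x.1.1, x.1.2 - x.2)‖ ^ 2)) := by
    intro x
    have := mul_le_mul_of_nonneg_left (norm_sub_sq_le (v x.1) (v (x.1.1, x.1.2 - x.2)))
      (wt_nonneg h0 x.2)
    unfold dt; linarith
  have hsum : Summable (dt J v) :=
    Summable.of_nonneg_of_le (dt_nonneg h0 v) hle hs.summable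
  refine ⟨hsum, ?_⟩
  calc ∑' x, dt J v x ≤ _ := hsum.tsum_le_tsum hle hs.summable
    _ = _ := by rw [hs.tsum_eq]; unfold mass2; ring

lemma DD_eq {J : ℕ → ℝ} {v : ℤ × ℤ → ℂ} (hs : Summable (dt J v)) :
    DD J v = ∑' x, dt J v x := by
  rw [hs.tsum_prod, Summable.tsum_prod hs.prod]
  unfold DD
  congr 1; ext n; congr 1; ext m
  rw [← (Equiv.subLeft m).tsum_eq]
  congr 1; ext k
  simp only [Equiv.subLeft_apply, dt, wt]
  by_cases hk : k = 0
  · simp [hk]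
  · simp [hk]

/-! ### Elementary properties of mass, potential and energy -/

lemma mem_swap {u : ℤ × ℤ → ℂ} (h : MemL2two u) : MemL2two (fun z => u z.swap) :=
  (Equiv.prodComm ℤ ℤ).summable_iff.2 h

lemma mass_swap (u : ℤ × ℤ → ℂ) : mass2 (fun z => u z.swap) = mass2 u :=
  (Equiv.prodComm ℤ ℤ).tsum_eq (fun z => ‖u z‖ ^ 2)

lemma mass_nonneg (u : ℤ × ℤ → ℂ) : 0 ≤ mass2 u := tsum_nonneg fun z => by positivity

lemma norm_sq_le_mass {u : ℤ × ℤ → ℂ} (h : MemL2two u) (z) : ‖u z‖ ^ 2 ≤ mass2 u :=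
  h.le_tsum z (fun _ _ => by positivity)

lemma norm_le_of_mass {u : ℤ × ℤ → ℂ} (h : MemL2two u) (z) : ‖u z‖ ≤ √(mass2 u) :=
  Real.le_sqrt_of_sq_le (norm_sq_le_mass h z)

lemma pairing_nonneg {J1 J2 : ℕ → ℝ} (h1 : ∀ k, 0 ≤ J1 k) (h2 : ∀ k, 0 ≤ J2 k)
    (u : ℤ × ℤ → ℂ) : 0 ≤ pairing2 J1 J2 u := by
  have key : ∀ (J : ℕ → ℝ) (v : ℤ × ℤ → ℂ), (∀ k, 0 ≤ J k) → 0 ≤ DD J v := by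
    intro J v h
    refine tsum_nonneg fun n => tsum_nonneg fun m => tsum_nonneg fun m' => ?_
    split_ifs
    · exact le_rfl
    · exact mul_nonneg (h _) (by positivity)
  rw [pairing2_eq]
  have := key J1 (fun z => u z.swap) h1
  have := key J2 u h2
  linarith

lemma pow_bound {p K t : ℝ} (hp : 1 < p) (ht : 0 ≤ t) (hK : t ≤ K) :
    t ^ (p + 1) ≤ K ^ (p - 1) * t ^ 2 := by
  have : t ^ (p + 1) = t ^ (p - 1) * t ^ 2 := by
    rw [← Real.rpow_natCast t 2, ← Real.rpow_add_of_nonneg ht (by linarith) (by norm_num)]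
    congr 1; push_cast; ring
  rw [this]
  gcongr

lemma ppot_summable {p : ℝ} (hp : 1 < p) {u : ℤ × ℤ → ℂ} (h : MemL2two u) :
    Summable fun z => ‖u z‖ ^ (p + 1) :=
  Summable.of_nonneg_of_le (fun z => by positivity)
    (fun z => pow_bound hp (norm_nonneg _) (norm_le_of_mass h z)) (h.mul_left _)

lemma ppot_le {p K : ℝ} (hp : 1 < p) {u : ℤ × ℤ → ℂ} (h : MemL2two u) (hK : ∀ z, ‖u z‖ ≤ K) :
    ppot2 p u ≤ K ^ (p - 1) * mass2 u := by
  unfold ppot2 mass2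
  rw [← tsum_mul_left]
  exact (ppot_summable hp h).tsum_le_tsum
    (fun z => pow_bound hp (norm_nonneg _) (hK z)) (h.mul_left _)

lemma ppot_nonneg (p : ℝ) (u : ℤ × ℤ → ℂ) : 0 ≤ ppot2 p u := tsum_nonneg fun z => by positivity

lemma ppot_pos {p : ℝ} (hp : 1 < p) {u : ℤ × ℤ → ℂ} (h : MemL2two u) {z} (hz : u z ≠ 0) :
    0 < ppot2 p u :=
  (ppot_summable hp h).tsum_pos (fun z => by positivity) z
    (Real.rpow_pos_of_pos (norm_pos_iff.2 hz) _)

/-- scaling -/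
def scl (c : ℝ) (u : ℤ × ℤ → ℂ) : ℤ × ℤ → ℂ := fun z => (c : ℂ) * u z

lemma mem_scl {c : ℝ} {u : ℤ × ℤ → ℂ} (h : MemL2two u) : MemL2two (scl c u) := by
  refine (h.mul_left (c ^ 2)).congr fun z => ?_
  simp [scl, mul_pow]

lemma mass_scl (c : ℝ) (u : ℤ × ℤ → ℂ) : mass2 (scl c u) = c ^ 2 * mass2 u := by
  unfold mass2
  rw [← tsum_mul_left]
  congr 1; ext z; simp [scl, mul_pow]

lemma ppot_scl {c : ℝ} (hc : 0 ≤ c) (p : ℝ) (u : ℤ × ℤ → ℂ) :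
    ppot2 p (scl c u) = c ^ (p + 1) * ppot2 p u := by
  unfold ppot2
  rw [← tsum_mul_left]
  congr 1; ext z
  rw [← Real.mul_rpow hc (norm_nonneg _)]
  simp [scl, abs_of_nonneg hc]

lemma DD_scl (c : ℝ) (J : ℕ → ℝ) (u : ℤ × ℤ → ℂ) : DD J (scl c u) = c ^ 2 * DD J u := by
  unfold DD
  simp_rw [← tsum_mul_left]
  congr 1; ext n; congr 1; ext m; congr 1; ext m'
  split_ifs
  · simp
  · rw [show scl c u (n, m) - scl c u (n, m') = (c : ℂ) * (u (n, m) - u (n, m')) by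
      simp [scl]; ring]
    simp [mul_pow]; ring

lemma pairing_scl (c : ℝ) (J1 J2 : ℕ → ℝ) (u : ℤ × ℤ → ℂ) :
    pairing2 J1 J2 (scl c u) = c ^ 2 * pairing2 J1 J2 u := by
  rw [pairing2_eq, pairing2_eq, DD_scl]
  have : DD J1 (fun z => scl c u z.swap) = c ^ 2 * DD J1 (fun z => u z.swap) :=
    DD_scl c J1 (fun z => u z.swap)
  rw [this]; ring

/-- translation -/
def trl (a : ℤ × ℤ) (u : ℤ × ℤ → ℂ) : ℤ × ℤ → ℂ := fun z => u (z + a)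

lemma mem_trl {a} {u : ℤ × ℤ → ℂ} (h : MemL2two u) : MemL2two (trl a u) :=
  (Equiv.addRight a).summable_iff.2 h

lemma mass_trl (a) (u : ℤ × ℤ → ℂ) : mass2 (trl a u) = mass2 u :=
  (Equiv.addRight a).tsum_eq (fun z => ‖u z‖ ^ 2)

lemma ppot_trl (p : ℝ) (a) (u : ℤ × ℤ → ℂ) : ppot2 p (trl a u) = ppot2 p u :=
  (Equiv.addRight a).tsum_eq (fun z => ‖u z‖ ^ (p + 1))

lemma DD_trl (J : ℕ → ℝ) (a : ℤ × ℤ) (u : ℤ × ℤ → ℂ) : DD J (trl a u) = DD J u := by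
  unfold DD
  rw [← (Equiv.addRight a.1).tsum_eq (fun n : ℤ => ∑' m : ℤ, ∑' m' : ℤ,
      if m' = m then 0 else J (m - m').natAbs * ‖u (n, m) - u (n, m')‖ ^ 2)]
  congr 1; ext n
  rw [← (Equiv.addRight a.2).tsum_eq (fun m : ℤ => ∑' m' : ℤ,
      if m' = m then 0 else J (m - m').natAbs * ‖u (_, m) - u (_, m')‖ ^ 2)]
  congr 1; ext m
  rw [← (Equiv.addRight a.2).tsum_eq (fun m' : ℤ => 
      if m' = _ then 0 else J (_ - m').natAbs * ‖u (_, _) - u (_, m')‖ ^ 2)]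
  congr 1; ext m'
  obtain ⟨a1, a2⟩ := a
  simp [trl]

lemma energy_trl (J1 J2 : ℕ → ℝ) (p : ℝ) (a : ℤ × ℤ) (u : ℤ × ℤ → ℂ) :
    energy2 J1 J2 p (trl a u) = energy2 J1 J2 p u := by
  unfold energy2
  rw [ppot_trl, pairing2_eq, pairing2_eq, DD_trl]
  have : DD J1 (fun z => trl a u z.swap) = DD J1 (fun z => u z.swap) := 
    DD_trl J1 a.swap (fun z => u z.swap)
  rw [this]

/-! ### Brezis--Lieb splitting -/

lemma bl_abstract {ι : Type*} (g a : ℕ → ι → ℝ) (b : ι → ℝ) (A : ℝ)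
    (hg : ∀ i, Tendsto (fun k => g k i) atTop (𝓝 0))
    (ha0 : ∀ k i, 0 ≤ a k i) (ha : ∀ k, Summable (a k)) (hA : ∀ k, ∑' i, a k i ≤ A)
    (hb0 : ∀ i, 0 ≤ b i) (hb : Summable b)
    (hab : ∀ ε : ℝ, 0 < ε → ∃ C : ℝ, ∀ k i, |g k i| ≤ ε * a k i + C * b i) :
    Tendsto (fun k => ∑' i, g k i) atTop (𝓝 0) := by
  have hA0 : 0 ≤ A := (tsum_nonneg (ha0 0)).trans (hA 0)
  have hgs : ∀ k, Summable (fun i => |g k i|) := by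
    intro k
    obtain ⟨C, hC⟩ := hab 1 one_pos
    exact Summable.of_nonneg_of_le (fun i => abs_nonneg _) (hC k)
      (((ha k).mul_left 1).add (hb.mul_left C))
  rw [Metric.tendsto_atTop]
  intro δ hδ
  set ε : ℝ := δ / (2 * (A + 1)) with hε
  have hεpos : 0 < ε := by positivity
  obtain ⟨C, hC⟩ := hab ε hεpos
  set h : ℕ → ι → ℝ := fun k i => max (|g k i| - ε * a k i) 0 with hh
  have hbd : ∀ k i, ‖h k i‖ ≤ |C| * b i := by
    intro k i
    rw [Real.norm_of_nonneg (le_max_right _ _)]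
    refine max_le ?_ (mul_nonneg (abs_nonneg _) (hb0 i))
    have := hC k i
    have := mul_le_mul_of_nonneg_right (le_abs_self C) (hb0 i)
    linarith
  have hlim : Tendsto (fun k => ∑' i, h k i) atTop (𝓝 (∑' _ : ι, (0 : ℝ))) := by
    refine tendsto_tsum_of_dominated_convergence (hb.mul_left |C|) (fun i => ?_)
      (Eventually.of_forall fun k i => hbd k i)
    have h1 : Tendsto (fun k => |g k i|) atTop (𝓝 0) := by simpa using (hg i).abs
    refine squeeze_zero (fun k => le_max_right _ _) (fun k => ?_) h1
    refine max_le ?_ (abs_nonneg _)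
    have := mul_nonneg hεpos.le (ha0 k i)
    linarith
  rw [tsum_zero, Metric.tendsto_atTop] at hlim
  obtain ⟨N, hN⟩ := hlim (δ / 2) (by positivity)
  refine ⟨N, fun k hk => ?_⟩
  have h1 := hN k hk
  have hhs : Summable (h k) := Summable.of_norm_bounded (hb.mul_left |C|) (hbd k)
  rw [Real.dist_eq, sub_zero] at h1 ⊢
  have h2 : |∑' i, g k i| ≤ ∑' i, |g k i| := by
    have := norm_tsum_le_tsum_norm (f := g k) (by simpa using hgs k)
    simpa using this
  have h3 : ∑' i, |g k i| ≤ ∑' i, (ε * a k i + h k i) := by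
    refine (hgs k).tsum_le_tsum (fun i => ?_) (((ha k).mul_left ε).add hhs)
    have := le_max_left (|g k i| - ε * a k i) 0
    simp only [hh]; linarith
  rw [((ha k).mul_left ε).tsum_add hhs, tsum_mul_left] at h3
  have h4 : ε * ∑' i, a k i ≤ ε * A := by gcongr; exact hA k
  have h5 : ε * A < δ / 2 := by
    rw [hε, div_mul_eq_mul_div, div_lt_div_iff₀ (by positivity) (by positivity)]
    nlinarith
  have h6 := le_abs_self (∑' i, h k i)
  linarith

lemma young {ε x y : ℝ} (c : ℝ) (hε : 0 < ε) : c * x * y ≤ ε * x ^ 2 + c ^ 2 / (4 * ε) * y ^ 2 := by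
  have h : c ^ 2 / (4 * ε) * y ^ 2 = ε * (c * y / (2 * ε)) ^ 2 := by field_simp; ring
  have h2 : c * x * y = 2 * ε * x * (c * y / (2 * ε)) := by field_simp
  rw [h, h2]
  nlinarith [mul_nonneg hε.le (sq_nonneg (x - c * y / (2 * ε)))]

lemma sq_cross (x y : ℂ) : |‖x + y‖ ^ 2 - ‖y‖ ^ 2 - ‖x‖ ^ 2| ≤ 2 * ‖x‖ * ‖y‖ := by
  have h1 := norm_add_le x y
  have h2 : |‖x‖ - ‖y‖| ≤ ‖x + y‖ := by
    simpa using abs_norm_sub_norm_le x (-y)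
  have h3 : (‖x‖ - ‖y‖) ^ 2 ≤ ‖x + y‖ ^ 2 := sq_le_sq' (by
    have := neg_abs_le (‖x‖ - ‖y‖); linarith) ((le_abs_self _).trans h2)
  have h4 : ‖x + y‖ ^ 2 ≤ (‖x‖ + ‖y‖) ^ 2 := by gcongr
  rw [abs_le]; constructor <;> nlinarith

lemma rpow_diff {s u v K : ℝ} (hs : 2 < s) (hv : 0 ≤ v) (huv : v ≤ u) (hK : u ≤ K) :
    u ^ s - v ^ s ≤ s * K ^ (s - 2) * u * (u - v) := by
  have hu : 0 ≤ u := hv.trans huv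
  rcases hu.eq_or_lt with h0 | hu
  · have : v = 0 := by linarith
    subst this; rw [← h0]; simp
  have hb := one_add_mul_self_le_rpow_one_add (s := v / u - 1) (p := s)
    (by have : 0 ≤ v / u := by positivity
        linarith) (by linarith)
  rw [add_sub_cancel, Real.div_rpow hv hu.le, le_div_iff₀ (by positivity)] at hb
  have h1 : u ^ s = u ^ (s - 2) * u * u := by
    rw [mul_assoc, ← pow_two, ← Real.rpow_natCast u 2, ← Real.rpow_add hu]; congr 1; push_cast; ring
  have h2 : (1 + s * (v / u - 1)) * u ^ s = u ^ s - s * u ^ (s - 2) * u * (u - v) := by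
    rw [h1]; field_simp; ring
  have h3 : u ^ (s - 2) ≤ K ^ (s - 2) := Real.rpow_le_rpow hu.le hK (by linarith)
  have h4 : s * u ^ (s - 2) * u * (u - v) ≤ s * K ^ (s - 2) * u * (u - v) := by
    have : 0 ≤ u - v := by linarith
    have : 0 ≤ s := by linarith
    gcongr
  linarith

lemma rpow_cross {s K : ℝ} (hs : 2 < s) (x y : ℂ) (hx : ‖x‖ ≤ K) (hy : ‖y‖ ≤ K)
    (hxy : ‖x + y‖ ≤ K) :
    |‖x + y‖ ^ s - ‖y‖ ^ s - ‖x‖ ^ s| ≤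
      s * K ^ (s - 2) * ‖x‖ * ‖y‖ + (s + 1) * K ^ (s - 2) * ‖y‖ ^ 2 := by
  have hK : 0 ≤ K := (norm_nonneg _).trans hx
  have hC : 0 ≤ K ^ (s - 2) := by positivity
  have h1 := norm_add_le x y
  have h1' : ‖x‖ ≤ ‖x + y‖ + ‖y‖ := by
    simpa using norm_sub_le (x + y) y
  have hy0 := norm_nonneg y
  have hx0 := norm_nonneg x
  have h2 : |‖x + y‖ ^ s - ‖x‖ ^ s| ≤ s * K ^ (s - 2) * (‖x‖ + ‖y‖) * ‖y‖ := by
    have hs0 : 0 ≤ s := by linarith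
    rcases le_total ‖x‖ ‖x + y‖ with h | h
    · rw [abs_of_nonneg (sub_nonneg.2 (Real.rpow_le_rpow hx0 h hs0))]
      refine (rpow_diff hs hx0 h hxy).trans ?_
      have : ‖x + y‖ - ‖x‖ ≤ ‖y‖ := by linarith
      have : 0 ≤ ‖x + y‖ - ‖x‖ := by linarith
      gcongr
    · rw [abs_sub_comm, abs_of_nonneg (sub_nonneg.2 (Real.rpow_le_rpow (norm_nonneg _) h hs0))]
      refine (rpow_diff hs (norm_nonneg _) h hx).trans ?_
      have : ‖x‖ - ‖x + y‖ ≤ ‖y‖ := by linarith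
      have : 0 ≤ ‖x‖ - ‖x + y‖ := by linarith
      have : ‖x‖ ≤ ‖x‖ + ‖y‖ := by linarith
      gcongr
  have h3 : ‖y‖ ^ s ≤ K ^ (s - 2) * ‖y‖ ^ 2 := by
    have := pow_bound (p := s - 1) (by linarith) hy0 hy
    rw [show s - 1 + 1 = s by ring, show s - 1 - 1 = s - 2 by ring] at this
    exact this
  have h4 : 0 ≤ ‖y‖ ^ s := by positivity
  rw [abs_le] at h2 ⊢
  constructor <;> nlinarith [h2.1, h2.2]

/-- Splitting of a weighted sum of squares. -/
lemma bl_sq {ι : Type*} (w : ι → ℝ) (hw : ∀ i, 0 ≤ w i) (X : ℕ → ι → ℂ) (Y : ι → ℂ) (A : ℝ)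
    (hX0 : ∀ i, Tendsto (fun k => X k i) atTop (𝓝 0))
    (hX : ∀ k, Summable fun i => w i * ‖X k i‖ ^ 2)
    (hA : ∀ k, ∑' i, w i * ‖X k i‖ ^ 2 ≤ A)
    (hY : Summable fun i => w i * ‖Y i‖ ^ 2)
    (hXY : ∀ k, Summable fun i => w i * ‖X k i + Y i‖ ^ 2) :
    Tendsto (fun k => ∑' i, w i * ‖X k i + Y i‖ ^ 2 - ∑' i, w i * ‖Y i‖ ^ 2 -
      ∑' i, w i * ‖X k i‖ ^ 2) atTop (𝓝 0) := by
  have := bl_abstract (fun k i => w i * ‖X k i + Y i‖ ^ 2 - w i * ‖Y i‖ ^ 2 - w i * ‖X k i‖ ^ 2)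
    (fun k i => w i * ‖X k i‖ ^ 2) (fun i => w i * ‖Y i‖ ^ 2) A ?_
    (fun k i => mul_nonneg (hw i) (by positivity)) hX hA
    (fun i => mul_nonneg (hw i) (by positivity)) hY ?_
  · refine this.congr fun k => ?_
    rw [((hXY k).sub hY).tsum_sub (hX k), (hXY k).tsum_sub hY]
  · intro i
    have h : Tendsto (fun k => w i * ‖X k i + Y i‖ ^ 2 - w i * ‖Y i‖ ^ 2 - w i * ‖X k i‖ ^ 2)
        atTop (𝓝 (w i * ‖0 + Y i‖ ^ 2 - w i * ‖Y i‖ ^ 2 - w i * ‖(0 : ℂ)‖ ^ 2)) :=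
      (((((hX0 i).add_const _).norm.pow 2).const_mul _).sub_const _).sub
        (((hX0 i).norm.pow 2).const_mul _)
    simpa using h
  · intro ε hε
    refine ⟨2 ^ 2 / (4 * ε), fun k i => ?_⟩
    have h1 := (sq_cross (X k i) (Y i)).trans (young (x := ‖X k i‖) (y := ‖Y i‖) 2 hε)
    have h2 := mul_le_mul_of_nonneg_left h1 (hw i)
    calc |w i * ‖X k i + Y i‖ ^ 2 - w i * ‖Y i‖ ^ 2 - w i * ‖X k i‖ ^ 2|
        = w i * |‖X k i + Y i‖ ^ 2 - ‖Y i‖ ^ 2 - ‖X k i‖ ^ 2| := by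
          rw [← abs_of_nonneg (hw i), ← abs_mul, abs_of_nonneg (hw i)]; congr 1; ring
      _ ≤ _ := h2
      _ = _ := by ring

lemma mem_sub {u v : ℤ × ℤ → ℂ} (hu : MemL2two u) (hv : MemL2two v) :
    MemL2two (fun z => u z - v z) ∧ mass2 (fun z => u z - v z) ≤ 2 * (mass2 u + mass2 v) := by
  have h := (Summable.add hu hv).mul_left 2
  have hs : MemL2two (fun z => u z - v z) :=
    Summable.of_nonneg_of_le (fun z => by positivity) (fun z => norm_sub_sq_le (u z) (v z)) h
  refine ⟨hs, ?_⟩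
  unfold mass2
  rw [← Summable.tsum_add hu hv, ← tsum_mul_left]
  exact Summable.tsum_le_tsum (fun z => norm_sub_sq_le (u z) (v z)) hs h

lemma bl_mass {Q : ℕ → ℤ × ℤ → ℂ} {q : ℤ × ℤ → ℂ} {ν : ℝ} (hQ : ∀ k, MemL2two (Q k))
    (hν : ∀ k, mass2 (Q k) = ν) (hq : MemL2two q)
    (hlim : ∀ z, Tendsto (fun k => Q k z) atTop (𝓝 (q z))) :
    Tendsto (fun k => mass2 (Q k) - mass2 q - mass2 (fun z => Q k z - q z)) atTop (𝓝 0) := by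
  have := bl_sq (fun _ : ℤ × ℤ => (1 : ℝ)) (fun _ => zero_le_one) (fun k z => Q k z - q z) q
    (2 * (ν + mass2 q)) (fun z => by simpa using (hlim z).sub_const (q z))
    (fun k => by simpa using! (mem_sub (hQ k) hq).1)
    (fun k => by simpa [hν k] using! (mem_sub (hQ k) hq).2)
    (by simpa using! hq) (fun k => by simpa using! hQ k)
  simpa [mass2] using this

lemma bl_DD {J : ℕ → ℝ} (h0 : ∀ k, 0 ≤ J k) (hJ : Summable fun k : ℕ => J (k + 1))
    {Q : ℕ → ℤ × ℤ → ℂ} {q : ℤ × ℤ → ℂ} {ν : ℝ} (hQ : ∀ k, MemL2two (Q k))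
    (hν : ∀ k, mass2 (Q k) = ν) (hq : MemL2two q)
    (hlim : ∀ z, Tendsto (fun k => Q k z) atTop (𝓝 (q z))) :
    Tendsto (fun k => DD J (Q k) - DD J q - DD J (fun z => Q k z - q z)) atTop (𝓝 0) := by
  have hW : 0 ≤ ∑' k, wt J k := tsum_nonneg (wt_nonneg h0)
  have hr := fun k => mem_sub (hQ k) hq
  have e : ∀ (k) (x : (ℤ × ℤ) × ℤ),
      (fun z => Q k z - q z) x.1 - (fun z => Q k z - q z) (x.1.1, x.1.2 - x.2) +
      (q x.1 - q (x.1.1, x.1.2 - x.2)) = Q k x.1 - Q k (x.1.1, x.1.2 - x.2) := by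
    intro k x; simp only; ring
  have := bl_sq (fun x : (ℤ × ℤ) × ℤ => wt J x.2) (fun x => wt_nonneg h0 x.2)
    (fun k x => (fun z => Q k z - q z) x.1 - (fun z => Q k z - q z) (x.1.1, x.1.2 - x.2))
    (fun x => q x.1 - q (x.1.1, x.1.2 - x.2))
    (4 * (∑' k, wt J k) * (2 * (ν + mass2 q)))
    (fun x => by
      have h1 := (hlim x.1).sub_const (q x.1)
      have h2 := (hlim (x.1.1, x.1.2 - x.2)).sub_const (q (x.1.1, x.1.2 - x.2))
      simpa using h1.sub h2)
    (fun k => (dt_summable h0 hJ (hr k).1).1)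
    (fun k => by
      refine (dt_summable h0 hJ (hr k).1).2.trans ?_
      have := (hr k).2
      rw [hν k] at this
      gcongr)
    (dt_summable h0 hJ hq).1
    (fun k => by simp only [e]; exact (dt_summable h0 hJ (hQ k)).1)
  simp only [e] at this
  refine this.congr fun k => ?_
  rw [DD_eq (dt_summable h0 hJ (hQ k)).1, DD_eq (dt_summable h0 hJ hq).1,
    DD_eq (dt_summable h0 hJ (hr k).1).1]
  rfl

lemma bl_ppot {p : ℝ} (hp : 1 < p)
    {Q : ℕ → ℤ × ℤ → ℂ} {q : ℤ × ℤ → ℂ} {ν : ℝ} (hQ : ∀ k, MemL2two (Q k))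
    (hν : ∀ k, mass2 (Q k) = ν) (hq : MemL2two q)
    (hlim : ∀ z, Tendsto (fun k => Q k z) atTop (𝓝 (q z))) :
    Tendsto (fun k => ppot2 p (Q k) - ppot2 p q - ppot2 p (fun z => Q k z - q z))
      atTop (𝓝 0) := by
  have hr := fun k => mem_sub (hQ k) hq
  set K : ℝ := √ν + √(mass2 q) with hK
  have hQK : ∀ k z, ‖Q k z‖ ≤ √ν := fun k z => hν k ▸ norm_le_of_mass (hQ k) z
  have hqK : ∀ z, ‖q z‖ ≤ √(mass2 q) := fun z => norm_le_of_mass hq z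
  have hs1 := Real.sqrt_nonneg ν
  have hs2 := Real.sqrt_nonneg (mass2 q)
  have := bl_abstract (fun k z => ‖Q k z‖ ^ (p + 1) - ‖q z‖ ^ (p + 1) - ‖Q k z - q z‖ ^ (p + 1))
    (fun k z => ‖Q k z - q z‖ ^ 2) (fun z => ‖q z‖ ^ 2) (2 * (ν + mass2 q)) ?_
    (fun k i => by positivity) (fun k => (hr k).1) (fun k => by
      have := (hr k).2
      rw [hν k] at this
      exact this) (fun i => by positivity) hq ?_
  · refine this.congr fun k => ?_
    have a1 := ppot_summable hp (hQ k)
    have a2 := ppot_summable hp hq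
    have a3 := ppot_summable hp (hr k).1
    rw [(a1.sub a2).tsum_sub a3, a1.tsum_sub a2]
    rfl
  · intro z
    have c : ContinuousAt (fun t : ℝ => t ^ (p + 1)) 0 :=
      Real.continuousAt_rpow_const _ _ (Or.inr (by linarith))
    have c' : ContinuousAt (fun t : ℝ => t ^ (p + 1)) ‖q z‖ :=
      Real.continuousAt_rpow_const _ _ (Or.inr (by linarith))
    have h1 : Tendsto (fun k => ‖Q k z - q z‖) atTop (𝓝 0) := by
      simpa using ((hlim z).sub_const (q z)).norm
    have h2 := c.tendsto.comp h1
    have h3 := c'.tendsto.comp (hlim z).norm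
    have h4 := (h3.sub_const (‖q z‖ ^ (p + 1))).sub h2
    have h5 : (0 : ℝ) ^ (p + 1) = 0 := Real.zero_rpow (by linarith)
    simpa [h5, Function.comp_def] using h4
  · intro ε hε
    refine ⟨((p + 1) * K ^ (p + 1 - 2)) ^ 2 / (4 * ε) + (p + 1 + 1) * K ^ (p + 1 - 2),
      fun k z => ?_⟩
    have h := rpow_cross (s := p + 1) (K := K) (by linarith) (Q k z - q z) (q z)
      ((norm_sub_le _ _).trans (add_le_add (hQK k z) (hqK z)))
      (by have := hqK z; linarith) (by have := hQK k z; simp; linarith)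
    rw [sub_add_cancel] at h
    have h2 := young (x := ‖Q k z - q z‖) (y := ‖q z‖) ((p + 1) * K ^ (p + 1 - 2)) hε
    linarith

lemma bl_energy {J1 J2 : ℕ → ℝ} {p : ℝ} (hp : 1 < p)
    (hJ1pos : ∀ k, 0 ≤ J1 k) (hJ2pos : ∀ k, 0 ≤ J2 k)
    (hJ1sum : Summable fun k : ℕ => J1 (k + 1)) (hJ2sum : Summable fun k : ℕ => J2 (k + 1))
    {Q : ℕ → ℤ × ℤ → ℂ} {q : ℤ × ℤ → ℂ} {ν : ℝ} (hQ : ∀ k, MemL2two (Q k))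
    (hν : ∀ k, mass2 (Q k) = ν) (hq : MemL2two q)
    (hlim : ∀ z, Tendsto (fun k => Q k z) atTop (𝓝 (q z))) :
    Tendsto (fun k => energy2 J1 J2 p (Q k) - energy2 J1 J2 p q -
      energy2 J1 J2 p (fun z => Q k z - q z)) atTop (𝓝 0) := by
  have h1 := bl_DD hJ2pos hJ2sum hQ hν hq hlim
  have h2 := bl_DD hJ1pos hJ1sum (fun k => mem_swap (hQ k))
    (fun k => (mass_swap (Q k)).trans (hν k)) (mem_swap hq) (fun z => hlim z.swap)
  have h3 := bl_ppot hp hQ hν hq hlim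
  have h4 := ((h2.const_mul (1/4)).add (h1.const_mul (1/4))).sub (h3.const_mul (1/(p+1)))
  simp only [mul_zero, add_zero, sub_zero] at h4
  refine h4.congr fun k => ?_
  unfold energy2
  rw [pairing2_eq, pairing2_eq, pairing2_eq]
  ring

/-! ### Scaling comparison and existence of minimizers -/

section minim
variable {J1 J2 : ℕ → ℝ} {p ν : ℝ}

lemma energy_lower (hp : 1 < p) (h1 : ∀ k, 0 ≤ J1 k) (h2 : ∀ k, 0 ≤ J2 k)
    {u : ℤ × ℤ → ℂ} (hu : MemL2two u) :
    -(1/(p+1) * (√(mass2 u) ^ (p - 1) * mass2 u)) ≤ energy2 J1 J2 p u := by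
  have a := pairing_nonneg h1 h2 u
  have b := ppot_le hp hu (norm_le_of_mass hu)
  have c : 1/(p+1) * ppot2 p u ≤ 1/(p+1) * (√(mass2 u) ^ (p - 1) * mass2 u) := by
    gcongr
  unfold energy2
  linarith

lemma Ifun_le (hp : 1 < p) (h1 : ∀ k, 0 ≤ J1 k) (h2 : ∀ k, 0 ≤ J2 k)
    {u : ℤ × ℤ → ℂ} (hu : MemL2two u) (hm : mass2 u = ν) :
    Ifun2 J1 J2 p ν ≤ energy2 J1 J2 p u := by
  refine csInf_le ⟨-(1/(p+1) * (√ν ^ (p - 1) * ν)), ?_⟩ ⟨u, hu, hm, rfl⟩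
  rintro x ⟨v, hv, hvm, rfl⟩
  have := energy_lower hp h1 h2 hv
  rwa [hvm] at this

/-- Scaling: for `0 < M[u] ≤ ν`. -/
lemma energy_scale (hp : 1 < p) (h1 : ∀ k, 0 ≤ J1 k) (h2 : ∀ k, 0 ≤ J2 k)
    {u : ℤ × ℤ → ℂ} (hu : MemL2two u) (hm : 0 < mass2 u) (hν : 0 < ν) :
    mass2 u / ν * Ifun2 J1 J2 p ν +
      ((ν / mass2 u) ^ ((p - 1) / 2) - 1) * (1 / (p + 1) * ppot2 p u) ≤ energy2 J1 J2 p u := by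
  set θ := ν / mass2 u with hθ
  have hθ0 : 0 < θ := by positivity
  have hsq : √θ ^ 2 = θ := Real.sq_sqrt hθ0.le
  have h := Ifun_le (ν := ν) hp h1 h2 (mem_scl (c := √θ) hu)
    (by rw [mass_scl, hsq, hθ]; field_simp)
  have hpw : √θ ^ (p + 1) = θ * θ ^ ((p - 1) / 2) := by
    rw [Real.sqrt_eq_rpow, ← Real.rpow_mul hθ0.le]
    nth_rewrite 2 [← Real.rpow_one θ]
    rw [← Real.rpow_add hθ0]; congr 1; ring
  unfold energy2 at h ⊢
  rw [pairing_scl, ppot_scl (Real.sqrt_nonneg _), hsq, hpw] at h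
  have hinv : mass2 u / ν = θ⁻¹ := by rw [hθ, inv_div]
  rw [hinv]
  have h' := mul_le_mul_of_nonneg_left h (inv_nonneg.2 hθ0.le)
  have e : θ⁻¹ * (1 / 2 * (θ * pairing2 J1 J2 u) - 1 / (p + 1) *
      (θ * θ ^ ((p - 1) / 2) * ppot2 p u)) = 1 / 2 * pairing2 J1 J2 u -
      1 / (p + 1) * (θ ^ ((p - 1) / 2) * ppot2 p u) := by
    field_simp
  rw [e] at h'
  linarith

lemma energy_scale_le (hp : 1 < p) (h1 : ∀ k, 0 ≤ J1 k) (h2 : ∀ k, 0 ≤ J2 k)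
    {u : ℤ × ℤ → ℂ} (hu : MemL2two u) (hν : 0 < ν) (hmν : mass2 u ≤ ν) :
    mass2 u / ν * Ifun2 J1 J2 p ν ≤ energy2 J1 J2 p u := by
  rcases (mass_nonneg u).eq_or_lt with h0 | h0
  · have := energy_lower hp h1 h2 hu
    rw [← h0] at this ⊢
    simpa using this
  · refine le_trans ?_ (energy_scale hp h1 h2 hu h0 hν)
    have : 1 ≤ (ν / mass2 u) ^ ((p - 1) / 2) :=
      Real.one_le_rpow ((one_le_div h0).2 hmν) (by linarith)
    have h3 : 0 ≤ 1 / (p + 1) * ppot2 p u :=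
      mul_nonneg (by positivity) (ppot_nonneg _ _)
    nlinarith

lemma energy_scale_lt (hp : 1 < p) (h1 : ∀ k, 0 ≤ J1 k) (h2 : ∀ k, 0 ≤ J2 k)
    {u : ℤ × ℤ → ℂ} (hu : MemL2two u) (hν : 0 < ν) (hmν : mass2 u < ν) {z} (hz : u z ≠ 0) :
    mass2 u / ν * Ifun2 J1 J2 p ν < energy2 J1 J2 p u := by
  have h0 : 0 < mass2 u :=
    lt_of_lt_of_le (by positivity) (norm_sq_le_mass hu z)
  refine lt_of_lt_of_le ?_ (energy_scale hp h1 h2 hu h0 hν)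
  have : 1 < (ν / mass2 u) ^ ((p - 1) / 2) :=
    Real.one_lt_rpow ((one_lt_div h0).2 hmν) (by linarith)
  have h3 : 0 < 1 / (p + 1) * ppot2 p u :=
    mul_pos (by positivity) (ppot_pos hp hu hz)
  nlinarith

theorem exists_min (hp : 1 < p) (h1 : ∀ k, 0 ≤ J1 k) (h2 : ∀ k, 0 ≤ J2 k)
    (hJ1sum : Summable fun k : ℕ => J1 (k + 1)) (hJ2sum : Summable fun k : ℕ => J2 (k + 1))
    (hν : 0 < ν) (hI : Ifun2 J1 J2 p ν < 0) :
    ∃ q : ℤ × ℤ → ℂ, MemL2two q ∧ mass2 q = ν ∧ energy2 J1 J2 p q = Ifun2 J1 J2 p ν := by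
  set I := Ifun2 J1 J2 p ν with hIdef
  set S : Set ℝ := {x : ℝ | ∃ q, MemL2two q ∧ mass2 q = ν ∧ energy2 J1 J2 p q = x} with hS
  have hSne : S.Nonempty := by
    by_contra hne
    rw [Set.not_nonempty_iff_eq_empty] at hne
    have : I = sInf S := rfl
    rw [this, hne, Real.sInf_empty] at hI
    exact lt_irrefl _ hI
  -- lower bound on the sup norm
  set δ : ℝ := (-(I / 2) / ν) ^ (1 / (p - 1)) with hδ
  have hδ0 : 0 < δ := by
    apply Real.rpow_pos_of_pos
    apply div_pos _ hν
    linarith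
  have hsup : ∀ u, MemL2two u → mass2 u = ν → energy2 J1 J2 p u ≤ I / 2 → ∃ z, δ ≤ ‖u z‖ := by
    intro u hu hm hE
    by_contra hcon
    push Not at hcon
    have a := ppot_le hp hu (fun z => (hcon z).le)
    have b := pairing_nonneg h1 h2 u
    have e : δ ^ (p - 1) = -(I / 2) / ν := by
      rw [hδ, ← Real.rpow_mul (div_pos (by linarith) hν).le, one_div_mul_cancel (by linarith),
        Real.rpow_one]
    rw [e, hm, div_mul_cancel₀ _ hν.ne'] at a
    unfold energy2 at hE
    have c : 1 / (p + 1) * ppot2 p u ≤ 1 / (p + 1) * -(I / 2) := by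
      gcongr
    have d : 1 / (p + 1) < 1 := by
      rw [div_lt_one (by linarith)]; linarith
    nlinarith
  have hseq : ∀ k : ℕ, ∃ u, MemL2two u ∧ mass2 u = ν ∧ δ ≤ ‖u 0‖ ∧
      energy2 J1 J2 p u < I + 1 / ((k : ℝ) + 1) := by
    intro k
    have hpos : 0 < min (-(I / 2)) (1 / ((k : ℝ) + 1)) :=
      lt_min (by linarith) (by positivity)
    obtain ⟨x, ⟨u, hu, hm, rfl⟩, hx⟩ := exists_lt_of_csInf_lt hSne
      (show sInf S < I + min (-(I / 2)) (1 / ((k : ℝ) + 1)) by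
        have : sInf S = I := rfl
        linarith)
    obtain ⟨z, hz⟩ := hsup u hu hm (by
      have := min_le_left (-(I / 2)) (1 / ((k : ℝ) + 1)); linarith)
    refine ⟨trl z u, mem_trl hu, (mass_trl z u).trans hm, by simpa [trl] using hz, ?_⟩
    rw [energy_trl]
    have := min_le_right (-(I / 2)) (1 / ((k : ℝ) + 1)); linarith
  choose Q0 hQ0 hQ0m hQ0δ hQ0E using hseq
  have hcpt : IsCompact (Set.pi Set.univ fun _ : ℤ × ℤ => Metric.closedBall (0 : ℂ) (√ν)) :=
    isCompact_univ_pi fun _ => isCompact_closedBall _ _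
  obtain ⟨q, -, φ, hφ, hlim0⟩ := hcpt.isSeqCompact (x := Q0) (fun k z _ => by
    simpa using hQ0m k ▸ norm_le_of_mass (hQ0 k) z)
  set Q : ℕ → ℤ × ℤ → ℂ := Q0 ∘ φ with hQdef
  have hlim : ∀ z, Tendsto (fun k => Q k z) atTop (𝓝 (q z)) := fun z =>
    (tendsto_pi_nhds.1 hlim0) z
  have hQ : ∀ k, MemL2two (Q k) := fun k => hQ0 _
  have hQm : ∀ k, mass2 (Q k) = ν := fun k => hQ0m _
  have hq : MemL2two q := by
    refine summable_of_sum_le (c := ν) (fun z => by positivity) (fun F => ?_)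
    have : Tendsto (fun k => ∑ z ∈ F, ‖Q k z‖ ^ 2) atTop (𝓝 (∑ z ∈ F, ‖q z‖ ^ 2)) :=
      tendsto_finsetSum _ fun z _ => (hlim z).norm.pow 2
    refine le_of_tendsto this (Eventually.of_forall fun k => ?_)
    rw [← hQm k]
    exact (hQ k).sum_le_tsum F (fun _ _ => by positivity)
  have hq0 : q 0 ≠ 0 := by
    have : δ ≤ ‖q 0‖ := ge_of_tendsto (hlim 0).norm (Eventually.of_forall fun k => hQ0δ _)
    exact norm_pos_iff.1 (by linarith)
  have hμ0 : 0 < mass2 q := lt_of_lt_of_le (by positivity) (norm_sq_le_mass hq 0)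
  have hm := bl_mass hQ hQm hq hlim
  have hE := bl_energy (J1 := J1) (J2 := J2) hp h1 h2 hJ1sum hJ2sum hQ hQm hq hlim
  have hmr : Tendsto (fun k => mass2 (fun z => Q k z - q z)) atTop (𝓝 (ν - mass2 q)) := by
    have := hm.const_sub (ν - mass2 q)
    rw [sub_zero] at this
    refine this.congr fun k => ?_
    rw [hQm k]; ring
  have hμν : mass2 q ≤ ν := by
    have := ge_of_tendsto hmr (Eventually.of_forall fun k => mass_nonneg _)
    linarith
  have hEQ : Tendsto (fun k => energy2 J1 J2 p (Q k)) atTop (𝓝 I) := by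
    have t : Tendsto (fun k : ℕ => I + 1 / ((k : ℝ) + 1)) atTop (𝓝 (I + 0)) :=
      tendsto_one_div_add_atTop_nhds_zero_nat.const_add I
    rw [add_zero] at t
    exact tendsto_of_tendsto_of_tendsto_of_le_of_le tendsto_const_nhds
      (t.comp hφ.tendsto_atTop) (fun k => Ifun_le hp h1 h2 (hQ k) (hQm k))
      (fun k => (hQ0E _).le)
  have hEr : Tendsto (fun k => energy2 J1 J2 p (fun z => Q k z - q z)) atTop
      (𝓝 (I - energy2 J1 J2 p q)) := by
    have := (hEQ.sub_const (energy2 J1 J2 p q)).sub hE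
    rw [sub_zero] at this
    exact this.congr fun k => by ring
  have hcmp : (ν - mass2 q) / ν * I ≤ I - energy2 J1 J2 p q := by
    refine le_of_tendsto_of_tendsto ((hmr.div_const ν).mul_const I) hEr ?_
    filter_upwards [hmr.eventually (gt_mem_nhds (show ν - mass2 q < ν by linarith))] with k hk
    exact energy_scale_le hp h1 h2 (mem_sub (hQ k) hq).1 hν hk.le
  have hcmp' : energy2 J1 J2 p q ≤ mass2 q / ν * I := by
    have : (ν - mass2 q) / ν * I = I - mass2 q / ν * I := by field_simp
    linarith
  have hmass : mass2 q = ν := by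
    by_contra hne
    have := energy_scale_lt (J1 := J1) (J2 := J2) hp h1 h2 hq hν (lt_of_le_of_ne hμν hne) hq0
    linarith
  refine ⟨q, hq, hmass, le_antisymm ?_ (Ifun_le hp h1 h2 hq hmass)⟩
  rw [hmass, div_self hν.ne', one_mul] at hcmp'
  exact hcmp'

end minim

/-! ### Trial functions -/

/-- tent function -/
def tent (N : ℝ) (n : ℤ) : ℝ := max (1 - |(n : ℝ)| / N) 0

lemma tent_nonneg (N : ℝ) (n) : 0 ≤ tent N n := le_max_right _ _

lemma tent_le {N : ℝ} (hN : 0 < N) (n) : tent N n ≤ 1 :=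
  max_le (by have : 0 ≤ |(n : ℝ)| / N := by positivity
             linarith) zero_le_one

lemma tent_zero {N : ℝ} (hN : 0 < N) {n : ℤ} (h : N ≤ |(n : ℝ)|) : tent N n = 0 :=
  max_eq_right (by have := (one_le_div hN).2 h; linarith)

lemma tent_half {N : ℝ} (hN : 0 < N) {n : ℤ} (h : |(n : ℝ)| ≤ N / 2) : 1 / 2 ≤ tent N n := by
  refine le_trans ?_ (le_max_left _ _)
  have : |(n : ℝ)| / N ≤ 1 / 2 := by rw [div_le_iff₀ hN]; linarith
  linarith

lemma tent_lip {N : ℝ} (hN : 0 < N) (n k : ℤ) :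
    |tent N n - tent N (n - k)| ≤ |(k : ℝ)| / N := by
  refine (abs_max_sub_max_le_abs _ _ _).trans ?_
  rw [show (1 - |(n : ℝ)| / N - (1 - |((n - k : ℤ) : ℝ)| / N)) =
    (|((n - k : ℤ) : ℝ)| - |(n : ℝ)|) / N by ring, abs_div, abs_of_pos hN]
  refine div_le_div_of_nonneg_right ?_ hN.le
  refine (abs_abs_sub_abs_le ((n - k : ℤ) : ℝ) (n : ℝ)).trans ?_
  push_cast
  simp

lemma tent_hold {N γ : ℝ} (hN : 0 < N) (hγ : 0 < γ) (hγ1 : γ ≤ 1) (n k : ℤ) :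
    (tent N n - tent N (n - k)) ^ 2 ≤ (|(k : ℝ)| / N) ^ (2 * γ) := by
  have h1 := tent_lip hN n k
  have h2 : |tent N n - tent N (n - k)| ≤ 1 := by
    rw [abs_le]
    constructor <;> linarith [tent_nonneg N n, tent_le hN n, tent_nonneg N (n - k),
      tent_le hN (n - k)]
  have h3 : |tent N n - tent N (n - k)| ≤ (|(k : ℝ)| / N) ^ γ := by
    rcases le_total (|(k : ℝ)| / N) 1 with h | h
    · refine h1.trans ?_
      exact Real.self_le_rpow_of_le_one (by positivity) h hγ1
    · exact h2.trans (Real.one_le_rpow h hγ.le)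
  rw [← sq_abs, mul_comm 2 γ, Real.rpow_mul (by positivity)]
  rw [show ((2 : ℝ)) = ((2 : ℕ) : ℝ) by norm_num, Real.rpow_natCast]
  gcongr

/-- The trial function. -/
def trial (N1 N2 : ℝ) (z : ℤ × ℤ) : ℂ := ((tent N1 z.1 * tent N2 z.2 : ℝ) : ℂ)

/-- The box. -/
def bx (L1 L2 : ℕ) : Finset (ℤ × ℤ) :=
  Finset.Icc (-(2 * L1 : ℤ)) (2 * L1) ×ˢ Finset.Icc (-(2 * L2 : ℤ)) (2 * L2)

lemma bx_card (L1 L2 : ℕ) (h1 : 0 < L1) (h2 : 0 < L2) :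
    ((bx L1 L2).card : ℝ) ≤ 25 * (L1 * L2) := by
  have : (bx L1 L2).card ≤ 25 * (L1 * L2) := by
    unfold bx
    rw [Finset.card_product, Int.card_Icc, Int.card_Icc,
      show (2 * (L1 : ℤ) + 1 - -(2 * L1)).toNat = 4 * L1 + 1 by omega,
      show (2 * (L2 : ℤ) + 1 - -(2 * L2)).toNat = 4 * L2 + 1 by omega]
    calc (4 * L1 + 1) * (4 * L2 + 1) ≤ (5 * L1) * (5 * L2) := by gcongr <;> omega
      _ = _ := by ring
  exact_mod_cast this

/-- indicator of the box -/
def ind (L1 L2 : ℕ) (z : ℤ × ℤ) : ℝ := if z ∈ bx L1 L2 then 1 else 0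

lemma ind_hasSum (L1 L2 : ℕ) : HasSum (ind L1 L2) ((bx L1 L2).card : ℝ) := by
  have : HasSum (ind L1 L2) (∑ z ∈ bx L1 L2, ind L1 L2 z) :=
    hasSum_sum_of_ne_finset_zero (fun z hz => by simp [ind, hz])
  convert this using 1
  rw [Finset.sum_congr rfl (fun z hz => show ind L1 L2 z = 1 by simp [ind, hz])]
  simp

lemma ind_nonneg (L1 L2 : ℕ) (z) : 0 ≤ ind L1 L2 z := by unfold ind; split_ifs <;> norm_num

lemma trial_out {L1 L2 : ℕ} (h1 : 0 < L1) (h2 : 0 < L2) {z : ℤ × ℤ} (hz : z ∉ bx L1 L2) :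
    trial (2 * L1) (2 * L2) z = 0 := by
  have h1' : (0 : ℝ) < 2 * L1 := by positivity
  have h2' : (0 : ℝ) < 2 * L2 := by positivity
  have : (2 * (L1 : ℤ)) ≤ |z.1| ∨ (2 * (L2 : ℤ)) ≤ |z.2| := by
    by_contra hcon
    push Not at hcon
    apply hz
    simp only [bx, Finset.mem_product, Finset.mem_Icc]
    rw [abs_lt, abs_lt] at hcon
    omega
  rcases this with h | h
  · have h' : (2 * (L1 : ℝ)) ≤ |(z.1 : ℝ)| := by exact_mod_cast h
    simp [trial, tent_zero h1' h']
  · have h' : (2 * (L2 : ℝ)) ≤ |(z.2 : ℝ)| := by exact_mod_cast h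
    simp [trial, tent_zero h2' h']

lemma trial_norm {N1 N2 : ℝ} (z : ℤ × ℤ) :
    ‖trial N1 N2 z‖ = tent N1 z.1 * tent N2 z.2 := by
  rw [trial, Complex.norm_real, Real.norm_of_nonneg (mul_nonneg (tent_nonneg _ _) (tent_nonneg _ _))]

lemma trial_sq_le {L1 L2 : ℕ} (h1 : 0 < L1) (h2 : 0 < L2) (z : ℤ × ℤ) :
    ‖trial (2 * L1) (2 * L2) z‖ ^ 2 ≤ ind L1 L2 z := by
  by_cases hz : z ∈ bx L1 L2
  · simp only [ind, hz, if_true, trial_norm]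
    have a := tent_le (show (0 : ℝ) < 2 * L1 by positivity) z.1
    have b := tent_le (show (0 : ℝ) < 2 * L2 by positivity) z.2
    have a' := tent_nonneg (2 * L1) z.1
    have b' := tent_nonneg (2 * L2) z.2
    exact pow_le_one₀ (mul_nonneg a' b') (mul_le_one₀ a b' b)
  · simp [trial_out h1 h2 hz, ind, hz]

lemma trial_mem {L1 L2 : ℕ} (h1 : 0 < L1) (h2 : 0 < L2) :
    MemL2two (trial (2 * L1) (2 * L2)) ∧ mass2 (trial (2 * L1) (2 * L2)) ≤ 25 * (L1 * L2) := by
  have hs := ind_hasSum L1 L2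
  have hm : MemL2two (trial (2 * L1) (2 * L2)) :=
    Summable.of_nonneg_of_le (fun z => by positivity) (trial_sq_le h1 h2) hs.summable
  refine ⟨hm, ?_⟩
  refine le_trans ?_ (bx_card L1 L2 h1 h2)
  rw [← hs.tsum_eq]
  exact Summable.tsum_le_tsum (trial_sq_le h1 h2) hm hs.summable

lemma trial_ppot {p : ℝ} (hp : 1 < p) {L1 L2 : ℕ} (h1 : 0 < L1) (h2 : 0 < L2) :
    (1 / 4 : ℝ) ^ (p + 1) * (L1 * L2) ≤ ppot2 p (trial (2 * L1) (2 * L2)) := by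
  have hs := ppot_summable hp (trial_mem h1 h2).1
  refine le_trans ?_ (hs.sum_le_tsum (Finset.Icc (1 : ℤ) L1 ×ˢ Finset.Icc (1 : ℤ) L2)
    (fun _ _ => by positivity))
  have hc : (((Finset.Icc (1 : ℤ) L1 ×ˢ Finset.Icc (1 : ℤ) L2).card : ℕ) : ℝ) = L1 * L2 := by
    rw [Finset.card_product, Int.card_Icc, Int.card_Icc]
    push_cast
    simp
  rw [← hc, mul_comm, ← nsmul_eq_mul]
  refine Finset.card_nsmul_le_sum _ _ _ fun z hz => ?_
  simp only [Finset.mem_product, Finset.mem_Icc] at hz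
  have key : ∀ (L : ℕ) (n : ℤ), 0 < L → 1 ≤ n → n ≤ L → 1 / 2 ≤ tent (2 * L) n := by
    intro L n hL hn hn'
    apply tent_half (by positivity)
    have a : (1 : ℝ) ≤ n := by exact_mod_cast hn
    have b : (n : ℝ) ≤ L := by exact_mod_cast hn'
    rw [abs_of_nonneg (by linarith)]; linarith
  have a := key L1 z.1 h1 hz.1.1 hz.1.2
  have b := key L2 z.2 h2 hz.2.1 hz.2.2
  refine Real.rpow_le_rpow (by norm_num) ?_ (by linarith)
  rw [trial_norm]
  nlinarith

lemma trial_DD {J : ℕ → ℝ} (h0 : ∀ k, 0 ≤ J k) (hJ : Summable fun k : ℕ => J (k + 1))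
    {γ : ℝ} (hγ : 0 < γ) (hγ1 : γ ≤ 1)
    (hJγ : Summable fun k : ℤ => wt J k * |(k : ℝ)| ^ (2 * γ))
    {L1 L2 : ℕ} (h1 : 0 < L1) (h2 : 0 < L2) :
    DD J (trial (2 * L1) (2 * L2)) ≤
      50 * (∑' k : ℤ, wt J k * |(k : ℝ)| ^ (2 * γ)) * (2 * L2 : ℝ) ^ (-(2 * γ)) * (L1 * L2) := by
  have hN : (0 : ℝ) < 2 * L2 := by positivity
  have hN1 : (0 : ℝ) < 2 * L1 := by positivity
  have hs := dt_summable h0 hJ (trial_mem h1 h2).1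
  rw [DD_eq hs.1]
  have hw0 : ∀ k : ℤ, 0 ≤ wt J k * |(k : ℝ)| ^ (2 * γ) := fun k =>
    mul_nonneg (wt_nonneg h0 k) (by positivity)
  have hb := (hasSum_shear _ _ hJγ (ind_hasSum L1 L2).summable hw0 (ind_nonneg L1 L2)).mul_left
    ((2 * L2 : ℝ) ^ (-(2 * γ)))
  rw [(ind_hasSum L1 L2).tsum_eq] at hb
  have hle : ∀ x, dt J (trial (2 * L1) (2 * L2)) x ≤ (2 * L2 : ℝ) ^ (-(2 * γ)) *
      (wt J x.2 * |(x.2 : ℝ)| ^ (2 * γ) *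
        (ind L1 L2 x.1 + ind L1 L2 (x.1.1, x.1.2 - x.2))) := by
    rintro ⟨⟨a, b⟩, k⟩
    simp only [dt]
    rw [show (2 * L2 : ℝ) ^ (-(2 * γ)) * (wt J k * |(k : ℝ)| ^ (2 * γ) *
        (ind L1 L2 (a, b) + ind L1 L2 (a, b - k))) =
      wt J k * (((2 * L2 : ℝ) ^ (-(2 * γ)) * |(k : ℝ)| ^ (2 * γ)) *
        (ind L1 L2 (a, b) + ind L1 L2 (a, b - k))) by ring]
    refine mul_le_mul_of_nonneg_left ?_ (wt_nonneg h0 k)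
    have hpw : (2 * L2 : ℝ) ^ (-(2 * γ)) * |(k : ℝ)| ^ (2 * γ) = (|(k : ℝ)| / (2 * L2)) ^ (2 * γ) := by
      rw [Real.div_rpow (abs_nonneg _) hN.le, Real.rpow_neg hN.le]; field_simp
    rw [hpw]
    by_cases hz : (a, b) ∈ bx L1 L2 ∨ (a, b - k) ∈ bx L1 L2
    · have hi : 1 ≤ ind L1 L2 (a, b) + ind L1 L2 (a, b - k) := by
        have := ind_nonneg L1 L2 (a, b)
        have := ind_nonneg L1 L2 (a, b - k)
        rcases hz with hz | hz
        · have : ind L1 L2 (a, b) = 1 := by simp [ind, hz]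
          linarith
        · have : ind L1 L2 (a, b - k) = 1 := by simp [ind, hz]
          linarith
      have hh := tent_hold hN hγ hγ1 b k
      have e : ‖trial (2 * L1) (2 * L2) (a, b) - trial (2 * L1) (2 * L2) (a, b - k)‖ ^ 2 =
          tent (2 * L1) a ^ 2 * (tent (2 * L2) b - tent (2 * L2) (b - k)) ^ 2 := by
        unfold trial
        rw [← Complex.ofReal_sub, Complex.norm_real, Real.norm_eq_abs, sq_abs]
        simp only; ring
      rw [e]
      have ht : tent (2 * L1) a ^ 2 ≤ 1 := pow_le_one₀ (tent_nonneg _ _) (tent_le hN1 a)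
      calc tent (2 * L1) a ^ 2 * (tent (2 * L2) b - tent (2 * L2) (b - k)) ^ 2
          ≤ 1 * (|(k : ℝ)| / (2 * L2)) ^ (2 * γ) := by gcongr
        _ = (|(k : ℝ)| / (2 * L2)) ^ (2 * γ) * 1 := by ring
        _ ≤ _ := by gcongr
    · push Not at hz
      simp [trial_out h1 h2 hz.1, trial_out h1 h2 hz.2, ind, hz.1, hz.2]
  calc ∑' x, dt J (trial (2 * L1) (2 * L2)) x ≤ _ := hs.1.tsum_le_tsum hle hb.summable
    _ = (2 * (2 * L2 : ℝ) ^ (-(2 * γ)) * (∑' k : ℤ, wt J k * |(k : ℝ)| ^ (2 * γ))) *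
        (bx L1 L2).card := by rw [hb.tsum_eq]; ring
    _ ≤ (2 * (2 * L2 : ℝ) ^ (-(2 * γ)) * (∑' k : ℤ, wt J k * |(k : ℝ)| ^ (2 * γ))) *
        (25 * (L1 * L2)) := by
      have : 0 ≤ ∑' k : ℤ, wt J k * |(k : ℝ)| ^ (2 * γ) := tsum_nonneg hw0
      gcongr
      exact bx_card L1 L2 h1 h2
    _ = _ := by ring

lemma trial_swap (N1 N2 : ℝ) : (fun z : ℤ × ℤ => trial N1 N2 z.swap) = trial N2 N1 := by
  ext z; simp [trial, mul_comm]

lemma order_summable {J : ℕ → ℝ} (h0 : ∀ k, 0 ≤ J k) {α : ℝ≥0∞}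
    (ho : JOrder1 J α) {γ : ℝ} (hγ : 0 < γ) (hγα : γ < alphaPrime α) :
    Summable fun k : ℤ => wt J k * |(k : ℝ)| ^ (2 * γ) := by
  obtain ⟨β, A, hβ, hA⟩ : ∃ β A : ℝ, 2 * γ < β ∧
      Tendsto (fun k : ℕ => (k : ℝ) ^ ((1 : ℝ) + β) * J k) atTop (𝓝 A) := by
    unfold JOrder1 at ho
    unfold alphaPrime at hγα
    split_ifs at ho with hα
    · subst hα
      simp at hγα
      exact ⟨2, 0, by linarith, ho 2 two_pos⟩
    · obtain ⟨A, -, hA⟩ := ho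
      refine ⟨α.toReal, A, ?_, hA⟩
      split_ifs at hγα with h2
      · linarith
      · have : (2 : ℝ) ≤ α.toReal := by
          have := ENNReal.toReal_mono hα (not_lt.1 h2)
          simpa using this
        linarith
  have hN : Summable (fun k : ℕ => J k * (k : ℝ) ^ (2 * γ)) := by
    have hsum : Summable fun k : ℕ => (A + 1) * (1 / (k : ℝ) ^ (1 + β - 2 * γ)) :=
      (Real.summable_one_div_nat_rpow.2 (by linarith)).mul_left _
    refine summable_of_isBigO_nat hsum (Asymptotics.IsBigO.of_bound 1 ?_)
    filter_upwards [hA.eventually (gt_mem_nhds (show A < A + 1 by linarith)),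
      eventually_gt_atTop 0] with k hk hk0
    have hk' : (0 : ℝ) < k := by exact_mod_cast hk0
    rw [Real.norm_of_nonneg (mul_nonneg (h0 k) (by positivity)), one_mul]
    refine le_trans ?_ (le_abs_self _)
    rw [mul_one_div, le_div_iff₀ (by positivity)]
    refine le_trans (le_of_eq ?_) hk.le
    rw [mul_assoc, ← Real.rpow_add hk', mul_comm]
    congr 2; ring
  have hN' : Summable (fun k : ℕ => wt J k * (k : ℝ) ^ (2 * γ)) := by
    refine hN.congr fun k => ?_
    rcases Nat.eq_zero_or_pos k with rfl | hk
    · simp [Real.zero_rpow (show 2 * γ ≠ 0 by positivity)]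
    · simp [wt, hk.ne']
  rw [summable_int_iff_summable_nat_and_neg]
  constructor <;>
  · refine hN'.congr fun k => ?_
    simp [wt]

lemma ceil_bounds {γ R : ℝ} (hγ : 0 < γ) (hR : 1 ≤ R) :
    0 < ⌈R ^ (1 / γ)⌉₊ ∧ (⌈R ^ (1 / γ)⌉₊ : ℝ) ≤ 2 * R ^ (1 / γ) ∧
      (2 * (⌈R ^ (1 / γ)⌉₊ : ℝ)) ^ (-(2 * γ)) ≤ R ^ (-2 : ℝ) := by
  have h1 : 1 ≤ R ^ (1 / γ) := Real.one_le_rpow hR (by positivity)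
  have h2 := Nat.le_ceil (R ^ (1 / γ))
  have h3 := (Nat.ceil_lt_add_one (show 0 ≤ R ^ (1 / γ) by linarith)).le
  refine ⟨Nat.ceil_pos.2 (by linarith), by linarith, ?_⟩
  have e : R ^ (-2 : ℝ) = (R ^ (1 / γ)) ^ (-(2 * γ)) := by
    rw [← Real.rpow_mul (by linarith)]; congr 1; field_simp
  rw [e]
  exact Real.rpow_le_rpow_of_nonpos (by linarith) (by linarith) (by linarith)

theorem exists_neg {p : ℝ} (hp : 1 < p) {J1 J2 : ℕ → ℝ}
    (hJ1pos : ∀ k, 0 ≤ J1 k) (hJ2pos : ∀ k, 0 ≤ J2 k)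
    (hJ1sum : Summable fun k : ℕ => J1 (k + 1)) (hJ2sum : Summable fun k : ℕ => J2 (k + 1))
    {γ₁ γ₂ : ℝ} (hγ₁ : 0 < γ₁) (hγ₂ : 0 < γ₂) (hγ₁1 : γ₁ ≤ 1) (hγ₂1 : γ₂ ≤ 1)
    (hS1 : Summable fun k : ℤ => wt J1 k * |(k : ℝ)| ^ (2 * γ₁))
    (hS2 : Summable fun k : ℤ => wt J2 k * |(k : ℝ)| ^ (2 * γ₂))
    (hsub : (1 / γ₁ + 1 / γ₂) * ((p - 1) / 2) < 2) {ν : ℝ} (hν : 0 < ν) :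
    ∃ q, MemL2two q ∧ mass2 q = ν ∧ energy2 J1 J2 p q < 0 := by
  set K1 := ∑' k : ℤ, wt J1 k * |(k : ℝ)| ^ (2 * γ₁) with hK1
  set K2 := ∑' k : ℤ, wt J2 k * |(k : ℝ)| ^ (2 * γ₂) with hK2
  have hK1n : 0 ≤ K1 := tsum_nonneg fun k => mul_nonneg (wt_nonneg hJ1pos k) (by positivity)
  have hK2n : 0 ≤ K2 := tsum_nonneg fun k => mul_nonneg (wt_nonneg hJ2pos k) (by positivity)
  set s := 1 / γ₁ + 1 / γ₂ with hs
  set e := 2 - s * ((p - 1) / 2) with he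
  have hepos : 0 < e := by linarith
  set c0 : ℝ := 1 / (p + 1) * ((ν / 100) ^ ((p - 1) / 2) * (1 / 4 : ℝ) ^ (p + 1)) with hc0
  have hc0pos : 0 < c0 := by positivity
  obtain ⟨R, hR, hR1⟩ := ((tendsto_rpow_atTop hepos).eventually
    (eventually_gt_atTop (25 * (K1 + K2) / c0))).and (eventually_ge_atTop (1 : ℝ)) |>.exists
  have hR0 : 0 < R := by linarith
  obtain ⟨l1, u1, d1⟩ := ceil_bounds hγ₁ hR1
  obtain ⟨l2, u2, d2⟩ := ceil_bounds hγ₂ hR1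
  set L1 := ⌈R ^ (1 / γ₁)⌉₊
  set L2 := ⌈R ^ (1 / γ₂)⌉₊
  set ψ := trial (2 * L1) (2 * L2) with hψ
  obtain ⟨hmem, hmass⟩ := trial_mem l1 l2
  have hl1 : (0 : ℝ) < L1 := by exact_mod_cast l1
  have hl2 : (0 : ℝ) < L2 := by exact_mod_cast l2
  have hpot := trial_ppot hp l1 l2
  have hD2 := trial_DD hJ2pos hJ2sum hγ₂ hγ₂1 hS2 l1 l2
  have hD1 := trial_DD hJ1pos hJ1sum hγ₁ hγ₁1 hS1 l2 l1
  rw [← hψ] at hmem hmass hpot hD2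
  have hpair : pairing2 J1 J2 ψ ≤ 25 * (K1 + K2) * R ^ (-2 : ℝ) * (L1 * L2) := by
    rw [pairing2_eq, hψ, trial_swap, ← hψ]
    have a1 : 50 * K1 * (2 * L1 : ℝ) ^ (-(2 * γ₁)) * (L2 * L1) ≤
      50 * K1 * R ^ (-2 : ℝ) * (L2 * L1) := by gcongr
    have a2 : 50 * K2 * (2 * L2 : ℝ) ^ (-(2 * γ₂)) * (L1 * L2) ≤
      50 * K2 * R ^ (-2 : ℝ) * (L1 * L2) := by gcongr
    linarith
  have hmpos : 0 < mass2 ψ := by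
    refine lt_of_lt_of_le ?_ (norm_sq_le_mass hmem 0)
    have : ‖ψ 0‖ = 1 := by
      rw [hψ, trial_norm]; simp [tent]
    rw [this]; norm_num
  set θ := ν / mass2 ψ with hθ
  have hθ0 : 0 < θ := by positivity
  have hsq : √θ ^ 2 = θ := Real.sq_sqrt hθ0.le
  have hpw : √θ ^ (p + 1) = θ * θ ^ ((p - 1) / 2) := by
    rw [Real.sqrt_eq_rpow, ← Real.rpow_mul hθ0.le]
    nth_rewrite 2 [← Real.rpow_one θ]
    rw [← Real.rpow_add hθ0]; congr 1; ring
  refine ⟨scl (√θ) ψ, mem_scl hmem, by rw [mass_scl, hsq, hθ]; field_simp, ?_⟩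
  unfold energy2
  rw [pairing_scl, ppot_scl (Real.sqrt_nonneg _), hsq, hpw]
  have hθlow : (ν / 100) ^ ((p - 1) / 2) * R ^ (-(s * ((p - 1) / 2))) ≤ θ ^ ((p - 1) / 2) := by
    have b1 : mass2 ψ ≤ 100 * R ^ s := by
      refine hmass.trans ?_
      rw [hs, Real.rpow_add hR0]
      have : (L1 : ℝ) * L2 ≤ (2 * R ^ (1 / γ₁)) * (2 * R ^ (1 / γ₂)) := by gcongr
      linarith
    have b2 : ν / 100 * R ^ (-s) ≤ θ := by
      rw [hθ, le_div_iff₀ hmpos]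
      calc ν / 100 * R ^ (-s) * mass2 ψ ≤ ν / 100 * R ^ (-s) * (100 * R ^ s) := by gcongr
        _ = ν * (R ^ (-s) * R ^ s) := by ring
        _ = ν := by rw [← Real.rpow_add hR0]; simp
    calc _ = (ν / 100 * R ^ (-s)) ^ ((p - 1) / 2) := by
          rw [Real.mul_rpow (by positivity) (by positivity), ← Real.rpow_mul hR0.le, neg_mul]
      _ ≤ _ := Real.rpow_le_rpow (by positivity) b2 (by linarith)
  have hfin : 1 / 2 * (25 * (K1 + K2) * R ^ (-2 : ℝ)) < c0 * R ^ (-(s * ((p - 1) / 2))) := by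
    have r1 : R ^ (-(s * ((p - 1) / 2))) = R ^ (-2 : ℝ) * R ^ e := by
      rw [← Real.rpow_add hR0]; congr 1; rw [he]; ring
    rw [r1]
    rw [div_lt_iff₀ hc0pos] at hR
    have hRm : 0 < R ^ (-2 : ℝ) := by positivity
    have q1 : 0 ≤ 25 * (K1 + K2) * R ^ (-2 : ℝ) := by positivity
    have q2 := mul_lt_mul_of_pos_right hR hRm
    linarith
  have hLL : 0 < (L1 : ℝ) * L2 := by positivity
  have t1 : 1 / (p + 1) * (θ ^ ((p - 1) / 2) * ppot2 p ψ) ≥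
      c0 * R ^ (-(s * ((p - 1) / 2))) * (L1 * L2) := by
    calc c0 * R ^ (-(s * ((p - 1) / 2))) * (L1 * L2)
        = 1 / (p + 1) * (((ν / 100) ^ ((p - 1) / 2) * R ^ (-(s * ((p - 1) / 2)))) *
          ((1 / 4 : ℝ) ^ (p + 1) * (L1 * L2))) := by rw [hc0]; ring
      _ ≤ _ := by gcongr
  have t2 : 1 / 2 * pairing2 J1 J2 ψ < 1 / (p + 1) * (θ ^ ((p - 1) / 2) * ppot2 p ψ) := by
    have := mul_lt_mul_of_pos_right hfin hLL
    linarith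
  have t3 := mul_lt_mul_of_pos_left t2 hθ0
  linarith

theorem stmt12 (p : ℝ) (hp : 1 < p) (J1 J2 : ℕ → ℝ)
    (hJ1pos : ∀ k, 0 ≤ J1 k) (hJ2pos : ∀ k, 0 ≤ J2 k)
    (hJ1sum : Summable fun k : ℕ => J1 (k + 1)) (hJ2sum : Summable fun k : ℕ => J2 (k + 1))
    (hJ11 : 0 < J1 1) (hJ21 : 0 < J2 1)
    (α₁ α₂ : ℝ≥0∞) (hα₁ : 0 < α₁) (hα₂ : 0 < α₂) (hαord : α₂ ≤ α₁)
    (horder1 : JOrder1 J1 α₁) (horder2 : JOrder1 J2 α₂)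
    (hpsub : p < 1 + 4 * alphaPrime α₁ * alphaPrime α₂ / (alphaPrime α₁ + alphaPrime α₂)) :
    nuZero2 J1 J2 p = 0 ∧
      ∀ ν : ℝ, 0 < ν → Ifun2 J1 J2 p ν < 0 ∧
        ∃ q : ℤ × ℤ → ℂ, MemL2two q ∧ mass2 q = ν ∧
          energy2 J1 J2 p q = Ifun2 J1 J2 p ν := by
  have ap : ∀ α : ℝ≥0∞, 0 < α → 0 < alphaPrime α ∧ alphaPrime α ≤ 1 := by
    intro α hα
    unfold alphaPrime
    split_ifs with h
    · have hne : α ≠ ⊤ := (h.trans (by simp)).ne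
      have h1 : 0 < α.toReal := ENNReal.toReal_pos hα.ne' hne
      have h2 : α.toReal ≤ 2 := by
        have := ENNReal.toReal_mono (by simp) h.le
        simpa using this
      constructor <;> linarith
    · norm_num
  obtain ⟨ha, ha1⟩ := ap α₁ hα₁
  obtain ⟨hb, hb1⟩ := ap α₂ hα₂
  set a := alphaPrime α₁ with hadef
  set b := alphaPrime α₂ with hbdef
  have hX : 0 < 4 * a * b / (a + b) := by positivity
  obtain ⟨t, ht1, ht2⟩ := exists_between
    (show (p - 1) / (4 * a * b / (a + b)) < 1 by rw [div_lt_one hX]; linarith)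
  have ht0 : 0 < t := lt_trans (div_pos (by linarith) hX) ht1
  have hta : t * a < a := by nlinarith
  have htb : t * b < b := by nlinarith
  have hsub : (1 / (t * a) + 1 / (t * b)) * ((p - 1) / 2) < 2 := by
    rw [div_lt_iff₀ hX] at ht1
    have e1 : t * (4 * a * b / (a + b)) * (a + b) = 4 * t * a * b := by field_simp
    have e2 : (p - 1) * (a + b) < 4 * t * a * b := by
      rw [← e1]; exact mul_lt_mul_of_pos_right ht1 (by positivity)
    have e3 : (1 / (t * a) + 1 / (t * b)) * ((p - 1) / 2) =
        ((p - 1) * (a + b)) / (2 * t * a * b) := by field_simp; ring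
    rw [e3, div_lt_iff₀ (by positivity)]
    linarith
  have hneg : ∀ ν : ℝ, 0 < ν → ∃ q, MemL2two q ∧ mass2 q = ν ∧ energy2 J1 J2 p q < 0 :=
    fun ν hν => exists_neg hp hJ1pos hJ2pos hJ1sum hJ2sum (mul_pos ht0 ha) (mul_pos ht0 hb)
      (by linarith) (by linarith)
      (order_summable hJ1pos horder1 (mul_pos ht0 ha) hta)
      (order_summable hJ2pos horder2 (mul_pos ht0 hb) htb) hsub hν
  constructor
  · have : {ν : ℝ | 0 < ν ∧ GNineq2 J1 J2 p ν} = ∅ := by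
      rw [Set.eq_empty_iff_forall_notMem]
      rintro ν ⟨hν, hGN⟩
      obtain ⟨q, hq, hm, hE⟩ := hneg ν hν
      have h := hGN q hq
      rw [hm, mul_assoc ((p + 1) / 2), ← Real.rpow_add hν,
        show -(p - 1) / 2 + (p - 1) / 2 = 0 by ring, Real.rpow_zero, mul_one] at h
      unfold energy2 at hE
      have hp1 : 0 < 1 / (p + 1) := by positivity
      have h2 := mul_le_mul_of_nonneg_left h hp1.le
      have e : 1 / (p + 1) * ((p + 1) / 2 * pairing2 J1 J2 q) = 1 / 2 * pairing2 J1 J2 q := by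
        field_simp
      linarith
    unfold nuZero2
    rw [this]
    simp
  · intro ν hν
    obtain ⟨q, hq, hm, hE⟩ := hneg ν hν
    have hI : Ifun2 J1 J2 p ν < 0 := (Ifun_le hp hJ1pos hJ2pos hq hm).trans_lt hE
    exact ⟨hI, exists_min hp hJ1pos hJ2pos hJ1sum hJ2sum hν hI⟩
end
end
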